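/- Let k and t be positive integers with k ≥ 4. There exists n₀ = n₀(k,t) such that for all integers n ≥ n₀, the maximum number of edges in a k-uniform hypergraph on n vertices containing no copy of the k-uniform linear path P^{(k)}_{2t+1} of length 2t+1 equals C(n−1,k−1) + C(n−2,k−1) + … + C(n−t,k−1). -/

import Mathlib

open Finset

/-- The family `F` of k-sets contains a k-uniform linear path of length ℓ:
distinct members `P 0, …, P (ℓ-1)` with consecutive members meeting in exactly one
vertex and non-consecutive members disjoint. -/
def ContainsLinearPath (k ℓ : ℕ) {n : ℕ} (F : Finset (Finset (Fin n))) : Prop :=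
  ∃ P : Fin ℓ → Finset (Fin n), Function.Injective P ∧
    (∀ i, P i ∈ F) ∧ (∀ i, (P i).card = k) ∧
    (∀ i j : Fin ℓ, (i : ℕ) + 1 = (j : ℕ) → (P i ∩ P j).card = 1) ∧
    (∀ i j : Fin ℓ, (i : ℕ) + 1 < (j : ℕ) → P i ∩ P j = ∅)

/-!
The lower bound is given by the `k`-sets meeting a fixed `t`-set `T`: in a linear path of length
`2t + 1` the `t + 1` edges at even positions are disjoint, so they cannot all meet `T`.

The upper bound is the delta-system method. Call `A` a kernel of a path-free family `H` if edges
containing `A` can avoid, outside `A`, any bounded set of vertices; then a linear path of kernels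
extends to a linear path of edges. By Füredi's theorem a positive proportion of any family is
homogeneous: every edge has the same, intersection-closed, pattern of kernels. Path-freeness leaves,
up to `O(n ^ (k - 2))` edges, only the pattern in which some vertex `x` of the edge forms a kernel
with each of the others. So `#H` is at most `∑ x, (deg x).choose (k - 1) + O(n ^ (k - 2))`, with
degrees in the graph of two-element kernels. This graph has no path of length `2t + 1`, hence
linearly many edges and no `K_{t+1,t+1}`, and if `H` is as large as claimed then convexity forces
exactly `t` vertices of nearly full degree. Let `T` be the set of these. Edges of `H` missing `T`
avoid the common neighbourhood of `T`, so they live on few vertices, and each of these vertices is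
responsible for more `k`-sets that meet `T` but are missing from `H`.
-/

/-! ### Linear paths -/

section LinearPath

variable {V : Type*} [DecidableEq V] {m : ℕ}

/-- A sequence of sets forming a linear path: consecutive sets share exactly one vertex and all
other pairs are disjoint. The sets need not have equal sizes, so that kernels may form linear paths
as well as edges. -/
structure IsLinearPath (P : Fin m → Finset V) : Prop where
  card_inter : ∀ i j : Fin m, (i : ℕ) + 1 = j → #(P i ∩ P j) = 1
  disjoint : ∀ i j : Fin m, (i : ℕ) + 1 < j → Disjoint (P i) (P j)

/-- The family `H` contains a linear path with `m` edges. -/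
def HasLinearPath (m : ℕ) (H : Finset (Finset V)) : Prop :=
  ∃ P : Fin m → Finset V, (∀ i, P i ∈ H) ∧ IsLinearPath P

lemma HasLinearPath.mono {F H : Finset (Finset V)} (hF : HasLinearPath m F) (hFH : F ⊆ H) :
    HasLinearPath m H :=
  let ⟨P, hPF, hP⟩ := hF
  ⟨P, fun i => hFH (hPF i), hP⟩

lemma IsLinearPath.congr {P Q : Fin m → Finset V} (hP : IsLinearPath P)
    (hPQ : ∀ i j, i ≠ j → Q i ∩ Q j = P i ∩ P j) : IsLinearPath Q where
  card_inter i j hij := by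
    rw [hPQ i j (by rintro rfl; lia)]
    exact hP.card_inter i j hij
  disjoint i j hij := by
    rw [disjoint_iff_inter_eq_empty, hPQ i j (by rintro rfl; lia), ← disjoint_iff_inter_eq_empty]
    exact hP.disjoint i j hij

lemma IsLinearPath.cons {P : Fin m → Finset V} (hP : IsLinearPath P) {E : Finset V}
    (hfirst : ∀ i : Fin m, (i : ℕ) = 0 → #(E ∩ P i) = 1)
    (hlater : ∀ i : Fin m, 0 < (i : ℕ) → Disjoint E (P i)) :
    IsLinearPath (Fin.cons E P : Fin (m + 1) → Finset V) where
  card_inter i j hij := by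
    cases j using Fin.cases with
    | zero => simp at hij
    | succ j =>
      cases i using Fin.cases with
      | zero => exact hfirst j (by simpa using hij.symm)
      | succ i => exact hP.card_inter i j (by simpa using hij)
  disjoint i j hij := by
    cases j using Fin.cases with
    | zero => simp at hij
    | succ j =>
      cases i using Fin.cases with
      | zero => exact hlater j (by simpa using hij)
      | succ i => exact hP.disjoint i j (by simpa using hij)

lemma isLinearPath_pairs {v : ℕ → V} (hv : Set.InjOn v {i | i ≤ m}) :
    IsLinearPath fun i : Fin m => ({v i, v (i + 1)} : Finset V) := by
  have inter_eq (i j : Fin m) : ({v i, v (i + 1)} : Finset V) ∩ {v j, v (j + 1)} =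
      image v ({(i : ℕ), (i : ℕ) + 1} ∩ {(j : ℕ), (j : ℕ) + 1}) := by
    rw [image_inter_of_injOn]
    · simp only [image_insert, image_singleton]
    · refine hv.mono fun l hl => ?_
      simp only [coe_insert, coe_singleton, Set.mem_union, Set.mem_insert_iff,
        Set.mem_singleton_iff] at hl
      simp only [Set.mem_ofPred_eq]
      lia
  refine ⟨fun i j hij => ?_, fun i j hij => ?_⟩
  · have : ({(i : ℕ), (i : ℕ) + 1} ∩ {(j : ℕ), (j : ℕ) + 1} : Finset ℕ) = {(j : ℕ)} := by
      ext; simp; lia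
    rw [inter_eq, this, image_singleton, card_singleton]
  · have : ({(i : ℕ), (i : ℕ) + 1} ∩ {(j : ℕ), (j : ℕ) + 1} : Finset ℕ) = ∅ := by
      ext; simp; lia
    rw [disjoint_iff_inter_eq_empty, inter_eq, this, image_empty]

lemma HasLinearPath.containsLinearPath {k n : ℕ} {H : Finset (Finset (Fin n))} (hk : 2 ≤ k)
    (hH : (H : Set (Finset (Fin n))).Sized k) (h : HasLinearPath m H) :
    ContainsLinearPath k m H := by
  obtain ⟨P, hPH, hP⟩ := h
  refine ⟨P, .of_lt_imp_ne fun i j hij hPij => ?_, hPH, fun i => hH (hPH i),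
    hP.card_inter, fun i j hij => disjoint_iff_inter_eq_empty.1 (hP.disjoint i j hij)⟩
  have hcard : #(P i ∩ P j) = k := by rw [hPij, inter_self, hH (hPH j)]
  rcases (show (i : ℕ) + 1 ≤ j from hij).eq_or_lt with hnext | hlater
  · have := hP.card_inter i j hnext
    lia
  · rw [disjoint_iff_inter_eq_empty.1 (hP.disjoint i j hlater), card_empty] at hcard
    lia

lemma ContainsLinearPath.hasLinearPath {k n : ℕ} {H : Finset (Finset (Fin n))}
    (h : ContainsLinearPath k m H) : HasLinearPath m H :=
  let ⟨P, _, hPH, _, hinter, hdisj⟩ := h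
  ⟨P, hPH, hinter, fun i j hij => disjoint_iff_inter_eq_empty.2 (hdisj i j hij)⟩

end LinearPath

/-! ### Kernels -/

section Kernel

variable {V : Type*} [DecidableEq V] {k s m : ℕ} {H F : Finset (Finset V)} {A : Finset V}

/-- `A` is an `s`-kernel of `H`: every set of at most `s` vertices can be avoided, outside `A`, by
an edge containing `A`. This is a robust form of being the kernel of a large sunflower in `H`. -/
def IsKernel (s : ℕ) (H : Finset (Finset V)) (A : Finset V) : Prop :=
  ∀ S : Finset V, #S ≤ s → ∃ E ∈ H, A ⊆ E ∧ E ∩ S ⊆ A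

lemma IsKernel.mono (hA : IsKernel s F A) (hFH : F ⊆ H) : IsKernel s H A := fun S hS =>
  let ⟨E, hE, hAE, hES⟩ := hA S hS
  ⟨E, hFH hE, hAE, hES⟩

lemma isKernel_of_mem (hA : A ∈ H) : IsKernel s H A :=
  fun _ _ => ⟨A, hA, Subset.rfl, inter_subset_left⟩

lemma IsKernel.card_le (hH : (H : Set (Finset V)).Sized k) (hA : IsKernel s H A) : #A ≤ k := by
  obtain ⟨E, hE, hAE, -⟩ := hA ∅ (by simp)
  exact (card_le_card hAE).trans (hH hE).le

/- Edges are themselves kernels, so the kernels can be replaced by edges one at a time. -/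
lemma exists_edges_inter_eq {ι : Type*} [Fintype ι]
    (hH : (H : Set (Finset V)).Sized k) (hs : Fintype.card ι * k ≤ s) {A : ι → Finset V}
    (hA : ∀ i, IsKernel s H (A i)) :
    ∃ E : ι → Finset V, (∀ i, E i ∈ H) ∧ ∀ i j, i ≠ j → E i ∩ E j = A i ∩ A j := by
  classical
  suffices replaced : ∀ I : Finset ι, ∃ E : ι → Finset V, (∀ i, IsKernel s H (E i)) ∧
      (∀ i ∈ I, E i ∈ H) ∧ ∀ i j, i ≠ j → E i ∩ E j = A i ∩ A j by
    obtain ⟨E, -, hEH, hE⟩ := replaced univ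
    exact ⟨E, fun i => hEH i (mem_univ i), hE⟩
  intro I
  induction I using Finset.induction_on with
  | empty => exact ⟨A, hA, by simp, fun _ _ _ => rfl⟩
  | insert a I _ ih =>
    obtain ⟨E, hEker, hEH, hE⟩ := ih
    obtain ⟨D, hDH, hED, hD⟩ := hEker a ((univ.erase a).biUnion E) <|
      (card_biUnion_le_card_mul _ _ _ fun i _ => (hEker i).card_le hH).trans <|
        (Nat.mul_le_mul_right k (card_erase_le.trans_eq card_univ)).trans hs
    have hDE (j : ι) (hj : j ≠ a) : D ∩ E j = E a ∩ E j := by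
      refine Subset.antisymm (fun x hx => ?_) (inter_subset_inter_right hED)
      rw [mem_inter] at hx ⊢
      exact ⟨hD (mem_inter.2 ⟨hx.1, mem_biUnion.2 ⟨j, by simpa using hj, hx.2⟩⟩), hx.2⟩
    refine ⟨Function.update E a D, fun i => ?_, fun i hi => ?_, fun i j hij => ?_⟩
    · rcases eq_or_ne i a with rfl | hia
      · simpa using isKernel_of_mem hDH
      · simpa [hia] using hEker i
    · rcases eq_or_ne i a with rfl | hia
      · simpa using hDH
      · simpa [hia] using hEH i (mem_of_mem_insert_of_ne hi hia)
    · rw [← hE i j hij]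
      rcases eq_or_ne i a with rfl | hia
      · simpa [hij.symm] using hDE j hij.symm
      rcases eq_or_ne j a with rfl | hja
      · simpa [hia, inter_comm] using hDE i hia
      · simp [hia, hja]

lemma IsLinearPath.hasLinearPath_of_isKernel (hH : (H : Set (Finset V)).Sized k) (hs : m * k ≤ s)
    {P : Fin m → Finset V} (hP : IsLinearPath P) (hker : ∀ i, IsKernel s H (P i)) :
    HasLinearPath m H := by
  obtain ⟨E, hEH, hE⟩ := exists_edges_inter_eq hH (by rwa [Fintype.card_fin]) hker
  exact ⟨E, hEH, hP.congr hE⟩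

lemma hasLinearPath_of_two_singleton_kernels (hF : (F : Set (Finset V)).Sized k)
    (hne : F.Nonempty) (hs : m * k ≤ s)
    (htwo : ∀ E ∈ F, ∃ x ∈ E, ∃ y ∈ E, x ≠ y ∧ IsKernel s F {x} ∧ IsKernel s F {y}) :
    HasLinearPath m F := by
  suffices extendable : ∀ l < m, ∃ P : Fin (l + 1) → Finset V, (∀ i, P i ∈ F) ∧ IsLinearPath P ∧
      ∃ x ∈ P 0, IsKernel s F {x} ∧ ∀ i, 0 < i → x ∉ P i by
    rcases m with - | l
    · exact ⟨Fin.elim0, fun i => i.elim0, ⟨fun i => i.elim0, fun i => i.elim0⟩⟩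
    · obtain ⟨P, hPF, hP, -⟩ := extendable l l.lt_succ_self
      exact ⟨P, hPF, hP⟩
  intro l hl
  induction l with
  | zero =>
    obtain ⟨E, hE⟩ := hne
    obtain ⟨x, hx, -, -, -, hker, -⟩ := htwo E hE
    exact ⟨fun _ => E, fun _ => hE, ⟨fun i j hij => by lia, fun i j hij => by lia⟩, x, hx, hker,
      fun i hi => by lia⟩
  | succ l ih =>
    obtain ⟨P, hPF, hP, x, hx, hker, hfree⟩ := ih (by lia)
    have hcard : #(univ.biUnion P) ≤ s :=
      (card_biUnion_le_card_mul _ _ _ fun i _ => (hF (hPF i)).le).trans <| by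
        rw [card_univ, Fintype.card_fin]
        exact (Nat.mul_le_mul_right k hl.le).trans hs
    obtain ⟨E, hE, hxE, hEP⟩ := hker _ hcard
    have eq_x {y : V} (i : Fin (l + 1)) (hyE : y ∈ E) (hyP : y ∈ P i) : y = x :=
      mem_singleton.1 (hEP (mem_inter.2 ⟨hyE, mem_biUnion.2 ⟨i, mem_univ i, hyP⟩⟩))
    obtain ⟨y, hyE, hyx, hyker⟩ : ∃ y ∈ E, y ≠ x ∧ IsKernel s F {y} := by
      obtain ⟨y, hy, z, hz, hyz, hyker, hzker⟩ := htwo E hE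
      rcases eq_or_ne y x with rfl | hyx
      · exact ⟨z, hz, hyz.symm, hzker⟩
      · exact ⟨y, hy, hyx, hyker⟩
    refine ⟨Fin.cons E P, Fin.cases hE hPF, hP.cons (fun i hi => ?_) fun i hi => ?_, y, hyE, hyker,
      Fin.cases (by simp) fun i _ hyP => hyx (eq_x i hyE hyP)⟩
    · obtain rfl : i = 0 := Fin.ext hi
      refine card_eq_one.2 ⟨x, eq_singleton_iff_unique_mem.2 ⟨mem_inter.2
        ⟨singleton_subset_iff.1 hxE, hx⟩, fun y hy => ?_⟩⟩
      exact eq_x 0 (mem_inter.1 hy).1 (mem_inter.1 hy).2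
    · refine disjoint_left.2 fun y hyE hyP => ?_
      exact hfree i hi (eq_x i hyE hyP ▸ hyP)

/-- The graph whose edges are the two-element kernels of `H`. -/
def kernelGraph (s : ℕ) (H : Finset (Finset V)) : SimpleGraph V where
  Adj x y := x ≠ y ∧ IsKernel s H {x, y}
  symm := ⟨fun x y h => ⟨h.1.symm, pair_comm x y ▸ h.2⟩⟩
  loopless := ⟨fun _ h => h.1 rfl⟩

lemma isKernel_getVert {x y : V} (p : (kernelGraph s H).Walk x y) {i : ℕ} (hi : i < p.length) :
    IsKernel s H {p.getVert i, p.getVert (i + 1)} :=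
  (p.adj_getVert_succ hi).2

lemma hasLinearPath_of_isPath (hH : (H : Set (Finset V)).Sized k) {x y : V}
    {p : (kernelGraph s H).Walk x y} (hp : p.IsPath) (hs : p.length * k ≤ s) :
    HasLinearPath p.length H :=
  (isLinearPath_pairs hp.getVert_injOn).hasLinearPath_of_isKernel hH hs
    fun i => isKernel_getVert p i.2

lemma hasLinearPath_of_isPath_of_edge (hH : (H : Set (Finset V)).Sized k) {x y : V}
    {p : (kernelGraph s H).Walk x y} (hp : p.IsPath) (hs : (p.length + 1) * k ≤ s) {E : Finset V}
    (hE : E ∈ H) (hxE : x ∈ E) (hpE : ∀ z ∈ p.support, z ∈ E → z = x) :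
    HasLinearPath (p.length + 1) H := by
  have not_mem {i : ℕ} (hi : i < p.length) : p.getVert (i + 1) ∉ E := fun hmem => by
    have hx := hpE _ (p.getVert_mem_support _) hmem
    have := hp.getVert_injOn (show i + 1 ≤ p.length from hi) (Nat.zero_le p.length)
      (hx.trans p.getVert_zero.symm)
    lia
  refine ((isLinearPath_pairs hp.getVert_injOn).cons (E := E) (fun i hi => ?_)
    fun i hi => ?_).hasLinearPath_of_isKernel hH hs
      (Fin.cases (isKernel_of_mem hE) fun i => isKernel_getVert p i.2)
  · rw [hi, p.getVert_zero, inter_insert_of_mem hxE,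
      inter_singleton_of_notMem (hi ▸ not_mem i.2), insert_empty_eq, card_singleton]
  · obtain ⟨j, hj⟩ := Nat.exists_eq_succ_of_ne_zero hi.ne'
    have hjlt : j < p.length := by lia
    rw [disjoint_insert_right, disjoint_singleton_right]
    exact ⟨hj ▸ not_mem hjlt, not_mem i.2⟩

end Kernel

/-! ### Homogeneous families -/

section Rainbow

variable {V α : Type*}

/-- Every edge of `F` contains each colour of `χ` exactly once. -/
def IsRainbow (χ : V → α) (F : Finset (Finset V)) : Prop :=
  ∀ E ∈ F, Set.BijOn χ E Set.univ

variable [Fintype α]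

open Classical in
lemma pow_le_card_rainbow_colorings [Fintype V] {E : Finset V} (hE : #E = Fintype.card α) :
    Fintype.card α ^ (Fintype.card V - Fintype.card α) ≤
      #{χ : V → α | Set.BijOn χ E Set.univ} := by
  let e : E ≃ α := Fintype.equivOfCardEq (by rw [Fintype.card_coe, hE])
  have hcard : Fintype.card ({v // v ∉ E} → α) =
      Fintype.card α ^ (Fintype.card V - Fintype.card α) := by
    rw [Fintype.card_fun, Fintype.card_subtype_compl, Fintype.card_coe, hE]
  rw [← hcard, ← card_univ]
  refine card_le_card_of_injOn (fun g v => if h : v ∈ E then e ⟨v, h⟩ else g ⟨v, h⟩)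
    (fun g _ => ?_) fun g _ g' _ hgg' => ?_
  · simp only [coe_filter_univ, Set.mem_ofPred_eq]
    refine ⟨Set.mapsTo_univ _ _, fun x hx y hy hxy => ?_, fun a _ => ?_⟩
    · have hx' : x ∈ E := hx
      have hy' : y ∈ E := hy
      simpa [hx', hy'] using hxy
    · exact ⟨e.symm a, (e.symm a).2, by simp⟩
  · ext ⟨v, hv⟩
    simpa [hv] using congrFun hgg' v

/- Averaging over all colourings: a fixed edge is rainbow in at least a `q ^ (-q)` proportion of
them, where `q` is the number of colours. -/
lemma card_le_of_isRainbow_card_le [Finite V] [Nonempty α] {F : Finset (Finset V)} {B : ℕ}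
    (hF : (F : Set (Finset V)).Sized (Fintype.card α))
    (hB : ∀ χ : V → α, ∀ F' ⊆ F, IsRainbow χ F' → #F' ≤ B) :
    #F ≤ Fintype.card α ^ Fintype.card α * B := by
  classical
  have := Fintype.ofFinite V
  rcases F.eq_empty_or_nonempty with rfl | ⟨E, hE⟩
  · simp
  set q := Fintype.card α
  have hqV : q ≤ Fintype.card V := hF hE ▸ card_le_univ E
  have hq : 0 < q := Fintype.card_pos
  refine Nat.le_of_mul_le_mul_left ?_ (pow_pos hq (Fintype.card V - q))
  calc q ^ (Fintype.card V - q) * #F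
      = ∑ _ ∈ F, q ^ (Fintype.card V - q) := by rw [sum_const, smul_eq_mul, mul_comm]
    _ ≤ ∑ E ∈ F, #{χ : V → α | Set.BijOn χ E Set.univ} :=
      sum_le_sum fun E hE => pow_le_card_rainbow_colorings (hF hE)
    _ = ∑ χ : V → α, #(F.filter fun E : Finset V => Set.BijOn χ E Set.univ) := by
      simp only [card_filter]
      exact sum_comm
    _ ≤ ∑ _χ : V → α, B := sum_le_sum fun χ _ =>
      hB χ _ (filter_subset _ _) fun E hE => (mem_filter.1 hE).2
    _ = q ^ (Fintype.card V - q) * (q ^ q * B) := by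
      rw [sum_const, card_univ, Fintype.card_fun, smul_eq_mul, ← mul_assoc, ← pow_add,
        Nat.sub_add_cancel hqV]

end Rainbow

section Homogeneous

variable {V α : Type*} [DecidableEq α] {s m : ℕ} {χ : V → α} {E : Finset V} {A : Finset α}

/-- The vertices of `E` whose colour lies in `A`. -/
def colorPart (χ : V → α) (E : Finset V) (A : Finset α) : Finset V :=
  {x ∈ E | χ x ∈ A}

lemma mem_colorPart {x : V} : x ∈ colorPart χ E A ↔ x ∈ E ∧ χ x ∈ A := mem_filter

lemma colorPart_subset : colorPart χ E A ⊆ E := filter_subset _ _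

lemma colorPart_univ [Fintype α] : colorPart χ E univ = E := by simp [colorPart]

lemma card_colorPart (hχ : Set.BijOn χ E Set.univ) : #(colorPart χ E A) = #A := by
  rw [← card_image_of_injOn (f := χ) (hχ.injOn.mono (coe_subset.2 colorPart_subset))]
  congr 1
  ext a
  simp only [mem_image, mem_colorPart]
  refine ⟨?_, fun ha => ?_⟩
  · rintro ⟨x, ⟨-, hx⟩, rfl⟩
    exact hx
  · obtain ⟨x, hx, rfl⟩ := hχ.surjOn (Set.mem_univ a)
    exact ⟨x, ⟨hx, ha⟩, rfl⟩

lemma colorPart_image (hχ : Set.InjOn χ E) {S : Finset V} (hS : S ⊆ E) :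
    colorPart χ E (S.image χ) = S := by
  ext x
  simp only [mem_colorPart, mem_image]
  refine ⟨?_, fun hx => ⟨hS hx, x, hx, rfl⟩⟩
  rintro ⟨hx, y, hy, hyx⟩
  exact hχ (hS hy) hx hyx ▸ hy

variable [DecidableEq V] {F : Finset (Finset V)} {J : Finset (Finset α)}

/-- No edge of `D` meets the colours `A` in a kernel of `D`. -/
def IsKernelFree (s : ℕ) (χ : V → α) (A : Finset α) (D : Finset (Finset V)) : Prop :=
  ∀ E ∈ D, ¬ IsKernel s D (colorPart χ E A)

/-- A rainbow family in which the same colour sets `J` mark the kernels inside every edge, so that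
`J` is the common intersection structure of its edges in the sense of Füredi. -/
structure IsHomogeneous (s : ℕ) (χ : V → α) (F : Finset (Finset V))
    (J : Finset (Finset α)) : Prop where
  isRainbow : IsRainbow χ F
  isKernel_iff : ∀ E ∈ F, ∀ A, IsKernel s F (colorPart χ E A) ↔ A ∈ J

lemma colorPart_insert (hχ : Set.InjOn χ E) {x : V} (hx : x ∈ E) :
    colorPart χ E (insert (χ x) A) = insert x (colorPart χ E A) := by
  ext y
  simp only [mem_colorPart, mem_insert]
  refine ⟨fun ⟨hy, hyA⟩ => hyA.imp (hχ hy hx) fun h => ⟨hy, h⟩, ?_⟩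
  rintro (rfl | ⟨hy, hyA⟩)
  · exact ⟨hx, .inl rfl⟩
  · exact ⟨hy, .inr hyA⟩

lemma IsKernelFree.insert {D : Finset (Finset V)} (hD : IsKernelFree s χ A D)
    (hχ : IsRainbow χ (insert E D)) (hE : ¬ IsKernel s (insert E D) (colorPart χ E A)) :
    IsKernelFree s χ A (insert E D) := by
  intro E' hE' hker
  rcases eq_or_ne (colorPart χ E' A) (colorPart χ E A) with heq | hne
  · exact hE (heq ▸ hker)
  have hE'D : E' ∈ D := (mem_insert.1 hE').resolve_left fun h => hne (h ▸ rfl)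
  refine hD E' hE'D fun S hS => ?_
  obtain ⟨G, hG, hE'G, hGS⟩ := hker S hS
  refine ⟨G, (mem_insert.1 hG).resolve_left ?_, hE'G, hGS⟩
  rintro rfl
  refine hne (eq_of_subset_of_card_le (fun x hx => ?_) ?_)
  · exact mem_colorPart.2 ⟨hE'G hx, (mem_colorPart.1 hx).2⟩
  · rw [card_colorPart (hχ _ hG), card_colorPart (hχ _ hE')]

/- An edge violating homogeneity for a colour set `A` is moved to `D A`, until none is left. -/
lemma IsRainbow.exists_isHomogeneous_decomposition (hχ : IsRainbow χ F)
    (hJ : ∀ E ∈ F, ∀ A, IsKernel s F (colorPart χ E A) → A ∈ J) :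
    ∃ R ⊆ F, ∃ D : Finset α → Finset (Finset V), IsHomogeneous s χ R J ∧
      (∀ A, D A ⊆ F ∧ IsKernelFree s χ A (D A)) ∧ F ⊆ R ∪ J.biUnion D := by
  induction F using Finset.strongInduction with
  | H F ih =>
    by_cases hhom : ∀ E ∈ F, ∀ A ∈ J, IsKernel s F (colorPart χ E A)
    · exact ⟨F, Subset.rfl, fun _ => ∅,
        ⟨hχ, fun E hE A => ⟨hJ E hE A, hhom E hE A⟩⟩, by simp [IsKernelFree], by simp⟩
    push Not at hhom
    obtain ⟨E, hE, A, hA, hnot⟩ := hhom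
    have hsub : F.erase E ⊆ F := erase_subset E F
    obtain ⟨R, hR, D, hhom, hD, hcover⟩ := ih (F.erase E) (erase_ssubset hE)
      (fun G hG => hχ G (hsub hG)) fun G hG B hB => hJ G (hsub hG) B (hB.mono hsub)
    have hins : insert E (D A) ⊆ F := insert_subset hE ((hD A).1.trans hsub)
    refine ⟨R, hR.trans hsub, Function.update D A (insert E (D A)), hhom, fun B => ?_,
      fun G hG => ?_⟩
    · rcases eq_or_ne B A with rfl | hBA
      · simpa using ⟨hins, (hD B).2.insert (fun G hG => hχ G (hins hG))
          fun hker => hnot (hker.mono hins)⟩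
      · simpa [hBA] using ⟨(hD B).1.trans hsub, (hD B).2⟩
    · simp only [mem_union, mem_biUnion]
      rcases eq_or_ne G E with rfl | hGE
      · exact .inr ⟨A, hA, by simp⟩
      · refine (mem_union.1 (hcover (mem_erase.2 ⟨hGE, hG⟩))).imp_right fun hGD => ?_
        obtain ⟨B, hB, hGB⟩ := mem_biUnion.1 hGD
        refine ⟨B, hB, ?_⟩
        rcases eq_or_ne B A with rfl | hBA
        · simpa using .inr hGB
        · simpa [hBA] using hGB

lemma IsHomogeneous.infClosed (hF : IsHomogeneous s χ F J) (hne : F.Nonempty) :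
    InfClosed (J : Set (Finset α)) := by
  intro A hA B hB
  obtain ⟨E, hE⟩ := hne
  refine (hF.isKernel_iff E hE _).1 fun S hS => ?_
  obtain ⟨E₁, hE₁, hEA, hE₁S⟩ := (hF.isKernel_iff E hE A).2 hA S hS
  obtain ⟨E₂, hE₂, hE₁B, hE₂S⟩ := (hF.isKernel_iff E₁ hE₁ B).2 hB S hS
  refine ⟨E₂, hE₂, fun x hx => ?_, fun x hx => ?_⟩
  · obtain ⟨hxE, hxAB⟩ := mem_colorPart.1 hx
    obtain ⟨hxA, hxB⟩ := mem_inter.1 hxAB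
    exact hE₁B (mem_colorPart.2 ⟨hEA (mem_colorPart.2 ⟨hxE, hxA⟩), hxB⟩)
  · obtain ⟨hxE₁, hxB⟩ := mem_colorPart.1 (hE₂S hx)
    obtain ⟨hxE, hxA⟩ := mem_colorPart.1 (hE₁S (mem_inter.2 ⟨hxE₁, (mem_inter.1 hx).2⟩))
    exact mem_colorPart.2 ⟨hxE, mem_inter.2 ⟨hxA, hxB⟩⟩

lemma IsHomogeneous.hasLinearPath {k : ℕ} (hF : IsHomogeneous s χ F J) (hne : F.Nonempty)
    (hk : (F : Set (Finset V)).Sized k) (hs : m * k ≤ s) {a b : α} (hab : a ≠ b) (ha : {a} ∈ J)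
    (hb : {b} ∈ J) : HasLinearPath m F := by
  refine hasLinearPath_of_two_singleton_kernels hk hne hs fun E hE => ?_
  have hχ := hF.isRainbow E hE
  have isKernel_of_color {x : V} (hx : x ∈ E) (hxJ : {χ x} ∈ J) : IsKernel s F {x} := by
    rw [← image_singleton, ← hF.isKernel_iff E hE] at hxJ
    rwa [colorPart_image hχ.injOn (singleton_subset_iff.2 hx)] at hxJ
  obtain ⟨x, hx, rfl⟩ := hχ.surjOn (Set.mem_univ a)
  obtain ⟨y, hy, rfl⟩ := hχ.surjOn (Set.mem_univ b)
  exact ⟨x, hx, y, hy, ne_of_apply_ne χ hab, isKernel_of_color hx ha, isKernel_of_color hy hb⟩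

variable [Fintype α]

lemma IsRainbow.card_le_of_isHomogeneous_card_le {B : ℕ} (hχ : IsRainbow χ F)
    (hJ : ∀ E ∈ F, ∀ A, IsKernel s F (colorPart χ E A) → A ∈ J)
    (hB : ∀ F' ⊆ F, ∀ J', IsHomogeneous s χ F' J' → #F' ≤ B) :
    #F ≤ (1 + 2 ^ Fintype.card α) ^ #J * B := by
  obtain ⟨N, hN⟩ : ∃ N, #J = N := ⟨_, rfl⟩
  induction N generalizing J F with
  | zero =>
    obtain ⟨R, hR, D, hhom, -, hcover⟩ := hχ.exists_isHomogeneous_decomposition hJ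
    rw [card_eq_zero.1 hN, biUnion_empty, union_empty] at hcover
    simpa [hN] using (card_le_card hcover).trans (hB R hR J hhom)
  | succ N ih =>
    obtain ⟨R, hR, D, hhom, hD, hcover⟩ := hχ.exists_isHomogeneous_decomposition hJ
    set c := 2 ^ Fintype.card α
    have hJc : #J ≤ c := (card_le_univ J).trans_eq Fintype.card_finset
    have hDcard (A : Finset α) (hA : A ∈ J) : #(D A) ≤ (1 + c) ^ N * B := by
      have hcard : #(J.erase A) = N := by rw [card_erase_of_mem hA, hN, Nat.add_sub_cancel]
      refine hcard ▸ ih (fun E hE => hχ E ((hD A).1 hE)) (fun E hE A' hker => ?_)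
        (fun F' hF' => hB F' (hF'.trans (hD A).1)) hcard
      refine mem_erase.2 ⟨?_, hJ E ((hD A).1 hE) A' (hker.mono (hD A).1)⟩
      rintro rfl
      exact (hD _).2 E hE hker
    calc #F ≤ #(R ∪ J.biUnion D) := card_le_card hcover
      _ ≤ #R + #(J.biUnion D) := card_union_le _ _
      _ ≤ B + #J * ((1 + c) ^ N * B) :=
        add_le_add (hB R hR J hhom) (card_biUnion_le_card_mul _ _ _ hDcard)
      _ ≤ (1 + c) ^ N * B + c * ((1 + c) ^ N * B) := by
        gcongr
        exact Nat.le_mul_of_pos_left B (by positivity)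
      _ = (1 + c) ^ #J * B := by rw [hN]; ring

theorem card_le_of_isHomogeneous_card_le [Finite V] [Nonempty α] {B : ℕ}
    (hF : (F : Set (Finset V)).Sized (Fintype.card α))
    (hB : ∀ χ : V → α, ∀ F' ⊆ F, ∀ J, IsHomogeneous s χ F' J → #F' ≤ B) :
    #F ≤ Fintype.card α ^ Fintype.card α *
      ((1 + 2 ^ Fintype.card α) ^ 2 ^ Fintype.card α * B) := by
  refine card_le_of_isRainbow_card_le hF fun χ F' hF' hχ => ?_
  have hbound := hχ.card_le_of_isHomogeneous_card_le (s := s) (J := univ) (by simp)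
    fun F'' hF'' => hB χ F'' (hF''.trans hF')
  rwa [card_univ, Fintype.card_finset] at hbound

lemma IsHomogeneous.univ_mem (hF : IsHomogeneous s χ F J) (hne : F.Nonempty) : univ ∈ J := by
  obtain ⟨E, hE⟩ := hne
  rw [← hF.isKernel_iff E hE, colorPart_univ]
  exact isKernel_of_mem hE

/- The edges with a given trace on the colours `A ⊇ B` branch over a set of at most `s` vertices
witnessing that this trace is not a kernel, and each branch fixes one more colour. -/
lemma IsHomogeneous.card_fiber_le (hF : IsHomogeneous s χ F J) {B : Finset α}
    (hB : ∀ A ∈ J, B ⊆ A → A = univ) (hBA : B ⊆ A) (T : Finset V) :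
    #{E ∈ F | colorPart χ E A = T} ≤ s ^ #Aᶜ := by
  obtain ⟨d, hd⟩ : ∃ d, #Aᶜ = d := ⟨_, rfl⟩
  induction d generalizing A T with
  | zero =>
    obtain rfl : A = univ := by rwa [card_eq_zero, compl_eq_empty_iff] at hd
    simp only [colorPart_univ, compl_univ, card_empty, pow_zero, card_le_one, mem_filter]
    rintro E ⟨-, rfl⟩ E' ⟨-, hE'⟩
    exact hE'.symm
  | succ d ih =>
    rcases eq_empty_or_nonempty {E ∈ F | colorPart χ E A = T} with hempty | ⟨E₀, hE₀⟩
    · simp [hempty]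
    obtain ⟨hE₀F, rfl⟩ := mem_filter.1 hE₀
    have hAJ : A ∉ J := fun hA => by simp [hB A hA hBA] at hd
    rw [← hF.isKernel_iff E₀ hE₀F, IsKernel] at hAJ
    push Not at hAJ
    obtain ⟨S, hS, hbranch⟩ := hAJ
    have hsub : ({E ∈ F | colorPart χ E A = colorPart χ E₀ A} : Finset (Finset V)) ⊆
        {x ∈ S | χ x ∉ A}.biUnion fun x =>
          {E ∈ F | colorPart χ E (insert (χ x) A) = insert x (colorPart χ E₀ A)} := by
      intro E hE
      obtain ⟨hEF, htrace⟩ := mem_filter.1 hE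
      obtain ⟨x, hxES, hx⟩ := not_subset.1 (hbranch E hEF (htrace ▸ colorPart_subset))
      obtain ⟨hxE, hxS⟩ := mem_inter.1 hxES
      rw [← htrace] at hx ⊢
      exact mem_biUnion.2 ⟨x, mem_filter.2 ⟨hxS, fun h => hx (mem_colorPart.2 ⟨hxE, h⟩)⟩,
        mem_filter.2 ⟨hEF, colorPart_insert (hF.isRainbow E hEF).injOn hxE⟩⟩
    have hcard (x : V) (hx : χ x ∉ A) : #(insert (χ x) A)ᶜ = d := by
      rw [compl_insert, card_erase_of_mem (mem_compl.2 hx), hd, Nat.add_sub_cancel]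
    calc #{E ∈ F | colorPart χ E A = colorPart χ E₀ A}
        ≤ #{x ∈ S | χ x ∉ A} * s ^ d := by
          refine (card_le_card hsub).trans (card_biUnion_le_card_mul _ _ _ fun x hx => ?_)
          have hx' := (mem_filter.1 hx).2
          exact hcard x hx' ▸ ih (hBA.trans (subset_insert _ _)) _ (hcard x hx')
      _ ≤ s * s ^ d := Nat.mul_le_mul_right _ ((card_filter_le _ _).trans hS)
      _ = s ^ #Aᶜ := by rw [hd, pow_succ']

lemma IsHomogeneous.card_le (hF : IsHomogeneous s χ F J) (hs : 0 < s) {W : Finset V}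
    (hW : ∀ E ∈ F, E ⊆ W) {B : Finset α} (hB : ∀ A ∈ J, B ⊆ A → A = univ) :
    #F ≤ s ^ Fintype.card α * #W ^ #B := by
  have hmaps : ∀ E ∈ F, colorPart χ E B ∈ W.powersetCard #B := fun E hE =>
    mem_powersetCard.2 ⟨colorPart_subset.trans (hW E hE), card_colorPart (hF.isRainbow E hE)⟩
  calc #F ≤ s ^ #Bᶜ * #(W.powersetCard #B) :=
        card_le_mul_card_image_of_maps_to hmaps _ fun T _ => hF.card_fiber_le hB Subset.rfl T
    _ ≤ s ^ Fintype.card α * #W ^ #B := by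
        rw [card_powersetCard]
        gcongr
        · exact card_le_univ _
        · exact Nat.choose_le_pow _ _

/-- The constant in the bounds obtained by passing to a homogeneous subfamily: `k ^ k` pays for
making the family rainbow, `(1 + 2 ^ k) ^ 2 ^ k` for making it homogeneous and `s ^ k` for the
number of edges with a prescribed trace. -/
def homogeneousConst (k s : ℕ) : ℕ := k ^ k * ((1 + 2 ^ k) ^ 2 ^ k * s ^ k)

theorem exists_isHomogeneous_of_lt_card [Finite V] [Nonempty α] {H : Finset (Finset V)}
    (hH : (H : Set (Finset V)).Sized (Fintype.card α)) (hs : 0 < s) {W : Finset V}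
    (hW : ∀ E ∈ H, E ⊆ W) {d : ℕ} (hcard : homogeneousConst (Fintype.card α) s * #W ^ d < #H) :
    ∃ χ : V → α, ∃ F ⊆ H, ∃ J : Finset (Finset α), F.Nonempty ∧ IsHomogeneous s χ F J ∧
      ∀ B, #B = d → ∃ A ∈ J, B ⊆ A ∧ A ≠ univ := by
  by_contra! hnone
  refine hcard.not_ge ?_
  have hbound := card_le_of_isHomogeneous_card_le (s := s)
    (B := s ^ Fintype.card α * #W ^ d) hH fun χ F hFH J hF => by
      rcases F.eq_empty_or_nonempty with rfl | hne
      · simp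
      obtain ⟨B, rfl, hB⟩ := hnone χ F hFH J hne hF
      exact hF.card_le hs (fun E hE => hW E (hFH hE)) hB
  rwa [← mul_assoc _ (s ^ _), ← mul_assoc] at hbound

end Homogeneous

/-! ### Intersection structures -/

section IntersectionStructure

variable {α : Type*} [Fintype α] [DecidableEq α] {J : Finset (Finset α)}

lemma mem_of_forall_notMem_exists (huniv : univ ∈ J) (hJ : InfClosed (J : Set (Finset α)))
    {A : Finset α} (hA : ∀ i ∉ A, ∃ B ∈ J, A ⊆ B ∧ i ∉ B) : A ∈ J := by
  choose! B hBJ hAB hB using hA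
  have hinf : A = Aᶜ.inf B := by
    refine le_antisymm (Finset.le_inf fun i hi => hAB i (mem_compl.1 hi)) fun i hi => ?_
    by_contra hiA
    exact hB i hiA (Finset.inf_le (f := B) (mem_compl.2 hiA) hi)
  rw [hinf]
  exact inf_mem (J : Set (Finset α)) huniv (fun _ hX _ hY => hJ hX hY) _ _
    fun i hi => hBJ i (mem_compl.1 hi)

lemma mem_of_forall_compl_singleton_mem (huniv : univ ∈ J) (hJ : InfClosed (J : Set (Finset α)))
    {A : Finset α} (hA : ∀ i ∉ A, {i}ᶜ ∈ J) : A ∈ J :=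
  mem_of_forall_notMem_exists huniv hJ fun i hi => ⟨{i}ᶜ, hA i hi, by simpa, by simp⟩

lemma compl_pair_mem {i j : α} (hi : {i}ᶜ ∉ J) (hj : {j}ᶜ ∉ J)
    (hcover : ∃ A ∈ J, {i, j}ᶜ ⊆ A ∧ A ≠ univ) : {i, j}ᶜ ∈ J := by
  obtain ⟨A, hAJ, hA, hne⟩ := hcover
  have notMem_of {x y : α} (hy : {y}ᶜ ∉ J) (hxy : {x, y}ᶜ ⊆ A) : x ∉ A := fun hx => by
    have hyA : {y}ᶜ ⊆ A := fun z hz => by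
      rcases eq_or_ne z x with rfl | hzx
      · exact hx
      · exact hxy (by simpa [hzx] using hz)
    exact hy (((isCoatom_compl_singleton y).le_iff_eq hne).1 hyA ▸ hAJ)
  have hAsub : A ⊆ {i, j}ᶜ := by
    rw [subset_compl_comm, insert_subset_iff, singleton_subset_iff, mem_compl, mem_compl]
    exact ⟨notMem_of hj hA, notMem_of hi (pair_comm i j ▸ hA)⟩
  exact hAsub.antisymm hA ▸ hAJ

lemma card_erase_eq_one_of_singleton_notMem (huniv : univ ∈ J) (hJ : InfClosed (J : Set (Finset α)))
    (hpair : ∀ i j, i ≠ j → {i}ᶜ ∉ J → {j}ᶜ ∉ J → {i, j}ᶜ ∈ J) {a : α} (ha : {a} ∉ J) :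
    #(({i | {i}ᶜ ∉ J} : Finset α).erase a) = 1 := by
  set U : Finset α := {i | {i}ᶜ ∉ J} with hU
  by_contra hcard
  refine ha (mem_of_forall_notMem_exists huniv hJ fun i hi => ?_)
  rw [mem_singleton] at hi
  by_cases hiJ : {i}ᶜ ∈ J
  · exact ⟨{i}ᶜ, hiJ, by simpa using hi, by simp⟩
  · have hiU : i ∈ U.erase a := by simp [hU, hi, hiJ]
    obtain ⟨j, hj, hji⟩ : ∃ j ∈ U.erase a, j ≠ i := by
      by_contra! hall
      exact hcard (card_eq_one.2 ⟨i, eq_singleton_iff_unique_mem.2 ⟨hiU, hall⟩⟩)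
    simp only [hU, mem_erase, mem_filter, mem_univ, true_and] at hj
    exact ⟨{i, j}ᶜ, hpair i j hji.symm hiJ hj.2, by simpa using ⟨Ne.symm hi, hj.1.symm⟩, by simp⟩

/- Let `U` be the set of colours `i` with `{i}ᶜ ∉ J`. For each `a` with `{a} ∉ J` the set
`U \ {a}` is a singleton, and as there are at least three such `a`, so is `U`. -/
theorem exists_forall_pair_mem (hα : 4 ≤ Fintype.card α) (huniv : univ ∈ J)
    (hJ : InfClosed (J : Set (Finset α))) (hsingle : ∀ a b, {a} ∈ J → {b} ∈ J → a = b)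
    (hcover : ∀ i j, i ≠ j → ∃ A ∈ J, {i, j}ᶜ ⊆ A ∧ A ≠ univ) :
    ∃ u, ∀ v, {u, v} ∈ J := by
  have hpair (i j : α) (hij : i ≠ j) (hi : {i}ᶜ ∉ J) (hj : {j}ᶜ ∉ J) : {i, j}ᶜ ∈ J :=
    compl_pair_mem hi hj (hcover i j hij)
  set U : Finset α := {i | {i}ᶜ ∉ J} with hU
  set M : Finset α := {a | {a} ∉ J} with hM
  have hMcard : 3 ≤ #M := by
    have hle : #{a : α | {a} ∈ J} ≤ 1 := card_le_one.2 (by simpa using fun a ha b => hsingle a b ha)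
    have := card_filter_add_card_filter_not (s := (univ : Finset α)) fun a => {a} ∈ J
    rw [card_univ] at this
    lia
  have herase (a : α) (ha : a ∈ M) : #(U.erase a) = 1 :=
    card_erase_eq_one_of_singleton_notMem huniv hJ hpair (by simpa [hM] using ha)
  obtain ⟨a, haM, haU⟩ : ∃ a ∈ M, a ∉ U := by
    by_contra! hMU
    obtain ⟨a, ha⟩ : M.Nonempty := card_pos.1 (by lia)
    have := herase a ha
    rw [card_erase_of_mem (hMU a ha)] at this
    have := card_le_card hMU
    lia
  obtain ⟨u, hu⟩ : ∃ u, U = {u} := card_eq_one.1 (erase_eq_of_notMem haU ▸ herase a haM)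
  refine ⟨u, fun v => mem_of_forall_compl_singleton_mem huniv hJ fun i hi => ?_⟩
  have hiU : i ∉ U := by
    rw [hu, mem_singleton]
    rintro rfl
    simp at hi
  simpa [hU] using hiU

end IntersectionStructure

/-! ### Families without long linear paths -/

section PathFree

variable {V : Type*} [DecidableEq V] {k s m : ℕ} {H : Finset (Finset V)}

theorem card_le_of_not_hasLinearPath [Finite V] (hk : 2 ≤ k) (hs : 0 < s) (hms : m * k ≤ s)
    (hH : (H : Set (Finset V)).Sized k) (hpath : ¬ HasLinearPath m H) {W : Finset V}
    (hW : ∀ E ∈ H, E ⊆ W) : #H ≤ homogeneousConst k s * #W ^ (k - 1) := by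
  have : NeZero k := ⟨by lia⟩
  by_contra! hcard
  obtain ⟨χ, F, hFH, J, hne, hF, hcover⟩ := exists_isHomogeneous_of_lt_card (α := Fin k)
    (d := k - 1) (by rwa [Fintype.card_fin]) hs hW (by rwa [Fintype.card_fin])
  have hcompl (i : Fin k) : {i}ᶜ ∈ J := by
    obtain ⟨A, hAJ, hiA, hA⟩ := hcover {i}ᶜ (by simp [card_compl])
    exact ((isCoatom_compl_singleton i).le_iff_eq hA).1 hiA ▸ hAJ
  have hmem (A : Finset (Fin k)) : A ∈ J :=
    mem_of_forall_compl_singleton_mem (hF.univ_mem hne) (hF.infClosed hne) fun i _ => hcompl i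
  have hne01 : (⟨0, by lia⟩ : Fin k) ≠ ⟨1, by lia⟩ := by simp
  exact hpath ((hF.hasLinearPath hne (hH.mono (coe_subset.2 hFH)) hms hne01 (hmem _)
    (hmem _)).mono hFH)

variable [Fintype V]

lemma card_le_of_forall_exists_not_adj (hk : 4 ≤ k) (hs : 0 < s) (hms : m * k ≤ s)
    (hH : (H : Set (Finset V)).Sized k) (hpath : ¬ HasLinearPath m H) {R : Finset (Finset V)}
    (hRH : R ⊆ H) (hR : ∀ E ∈ R, ∀ x ∈ E, ∃ y ∈ E, y ≠ x ∧ ¬ (kernelGraph s H).Adj x y) :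
    #R ≤ homogeneousConst k s * Fintype.card V ^ (k - 2) := by
  have : NeZero k := ⟨by lia⟩
  by_contra! hcard
  obtain ⟨χ, F, hFR, J, hne, hF, hcover⟩ := exists_isHomogeneous_of_lt_card (α := Fin k)
    (d := k - 2) (by rw [Fintype.card_fin]; exact hH.mono (coe_subset.2 hRH)) hs
    (fun E _ => subset_univ E) (by rwa [Fintype.card_fin])
  have hFH := hFR.trans hRH
  obtain ⟨u, hu⟩ := exists_forall_pair_mem (by rwa [Fintype.card_fin]) (hF.univ_mem hne)
    (hF.infClosed hne)
    (fun a b ha hb => by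
      by_contra hab
      exact hpath ((hF.hasLinearPath hne (hH.mono (coe_subset.2 hFH)) hms hab ha hb).mono hFH))
    (fun i j hij => hcover {i, j}ᶜ (by rw [card_compl, card_pair hij, Fintype.card_fin]))
  obtain ⟨E, hE⟩ := hne
  have hχ := hF.isRainbow E hE
  obtain ⟨x, hx, rfl⟩ := hχ.surjOn (Set.mem_univ u)
  obtain ⟨y, hy, hyx, hadj⟩ := hR E (hFR hE) x hx
  have hker := (hF.isKernel_iff E hE (image χ {x, y})).2 (by simpa using hu (χ y))
  rw [colorPart_image hχ.injOn (by simp [insert_subset_iff, mem_coe.1 hx, hy])] at hker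
  exact hadj ⟨hyx.symm, hker.mono hFH⟩

noncomputable instance : DecidableRel (kernelGraph s H).Adj := Classical.decRel _

theorem card_le_add_sum_choose_degree (hk : 4 ≤ k) (hs : 0 < s) (hms : m * k ≤ s)
    (hH : (H : Set (Finset V)).Sized k) (hpath : ¬ HasLinearPath m H) :
    #H ≤ homogeneousConst k s * Fintype.card V ^ (k - 2) +
      ∑ x, ((kernelGraph s H).degree x).choose (k - 1) := by
  set G := kernelGraph s H
  set R : Finset (Finset V) := {E ∈ H | ∀ x ∈ E, ∃ y ∈ E, y ≠ x ∧ ¬ G.Adj x y}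
  have hR : #R ≤ homogeneousConst k s * Fintype.card V ^ (k - 2) :=
    card_le_of_forall_exists_not_adj hk hs hms hH hpath (filter_subset _ _)
      fun E hE => (mem_filter.1 hE).2
  have hcover : H ⊆ R ∪ univ.biUnion fun x =>
      ((G.neighborFinset x).powersetCard (k - 1)).image (insert x) := by
    intro E hE
    by_cases hER : ∀ x ∈ E, ∃ y ∈ E, y ≠ x ∧ ¬ G.Adj x y
    · exact mem_union_left _ (mem_filter.2 ⟨hE, hER⟩)
    · push Not at hER
      obtain ⟨x, hx, hadj⟩ := hER
      refine mem_union_right _ (mem_biUnion.2 ⟨x, mem_univ x, mem_image.2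
        ⟨E.erase x, mem_powersetCard.2 ⟨fun y hy => ?_, ?_⟩, insert_erase hx⟩⟩)
      · obtain ⟨hyx, hyE⟩ := mem_erase.1 hy
        exact (G.mem_neighborFinset x y).2 (hadj y hyE hyx)
      · rw [card_erase_of_mem hx, hH hE]
  refine (card_le_card hcover).trans ((card_union_le _ _).trans (add_le_add hR ?_))
  refine card_biUnion_le.trans (sum_le_sum fun x _ => card_image_le.trans ?_)
  rw [card_powersetCard, G.card_neighborFinset_eq_degree]

end PathFree

/-! ### Paths and common neighbourhoods in graphs -/

section Graph

variable {V : Type*} {G : SimpleGraph V} {m t : ℕ}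

lemma exists_isPath_of_isCompleteBetween [DecidableEq V] {X Y : Finset V}
    (hXY : G.IsCompleteBetween X Y) {x : V} (hx : x ∈ X) (hX : m / 2 < #X)
    (hY : (m + 1) / 2 ≤ #Y) :
    ∃ w, ∃ p : G.Walk x w, p.IsPath ∧ p.length = m ∧ ∀ z ∈ p.support, z ∈ X ∪ Y := by
  induction m generalizing X Y x with
  | zero => exact ⟨x, .nil, .nil, rfl, by simp [hx]⟩
  | succ m ih =>
    obtain ⟨y, hy⟩ : Y.Nonempty := card_pos.1 (by lia)
    have hYX : G.IsCompleteBetween Y (X.erase x) := fun v hv w hw =>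
      (hXY (mem_of_mem_erase hw) hv).symm
    obtain ⟨w, p, hp, hlen, hsupp⟩ := ih hYX hy (by lia) (by rw [card_erase_of_mem hx]; lia)
    have hxp : x ∉ p.support := fun hxp => by
      have hxY : x ∉ Y := disjoint_left.1 (disjoint_coe.1 hXY.disjoint) hx
      simpa [hxY] using hsupp x hxp
    refine ⟨w, .cons (hXY hx hy) p, hp.cons hxp, by simp [hlen], fun z hz => ?_⟩
    rw [SimpleGraph.Walk.support_cons, List.mem_cons] at hz
    rcases hz with rfl | hz
    · exact mem_union_left Y hx
    · rw [union_comm]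
      exact union_subset_union_right (erase_subset x X) (hsupp z hz)

variable [DecidableRel G.Adj]

lemma exists_isPath_of_le_degree {W : Finset V} (hne : W.Nonempty)
    (hdeg : ∀ x ∈ W, m ≤ #{y ∈ W | G.Adj x y}) :
    ∃ x y, ∃ p : G.Walk x y, p.IsPath ∧ p.length = m := by
  classical
  suffices extendable : ∀ l ≤ m, ∃ x ∈ W, ∃ y, ∃ p : G.Walk x y, p.IsPath ∧ p.length = l by
    obtain ⟨x, -, y, p, hp⟩ := extendable m le_rfl
    exact ⟨x, y, p, hp⟩
  intro l hl
  induction l with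
  | zero =>
    obtain ⟨x, hx⟩ := hne
    exact ⟨x, hx, x, .nil, .nil, rfl⟩
  | succ l ih =>
    obtain ⟨x, hx, y, p, hp, hlen⟩ := ih (by lia)
    have hcard : #(p.support.toFinset.erase x) ≤ l := by
      rw [card_erase_of_mem (by simp)]
      have := p.support.toFinset_card_le
      rw [p.length_support, hlen] at this
      lia
    obtain ⟨z, hz, hzp⟩ := exists_mem_notMem_of_card_lt_card
      ((hcard.trans_lt hl).trans_le (hdeg x hx))
    obtain ⟨hzW, hxz⟩ := mem_filter.1 hz
    have hzsupp : z ∉ p.support := by simpa [hxz.ne'] using hzp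
    exact ⟨z, hzW, y, .cons hxz.symm p, hp.cons hzsupp, by simp [hlen]⟩

/- A weak Erdős–Gallai theorem: repeatedly delete a vertex of degree less than `m`. -/
lemma sum_degree_le_of_forall_isPath_length_ne [Fintype V]
    (hpath : ∀ x y, ∀ p : G.Walk x y, p.IsPath → p.length ≠ m) :
    ∑ x, G.degree x ≤ 2 * m * Fintype.card V := by
  classical
  suffices within : ∀ W : Finset V, ∑ x ∈ W, #{y ∈ W | G.Adj x y} ≤ 2 * m * #W by
    simpa [← G.card_neighborFinset_eq_degree, G.neighborFinset_eq_filter] using within univ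
  intro W
  induction W using Finset.strongInduction with
  | H W ih =>
    rcases W.eq_empty_or_nonempty with rfl | hne
    · simp
    obtain ⟨x, hx, hdeg⟩ : ∃ x ∈ W, #{y ∈ W | G.Adj x y} < m := by
      by_contra! hdeg
      obtain ⟨x, y, p, hp, hlen⟩ := exists_isPath_of_le_degree hne hdeg
      exact hpath x y p hp hlen
    obtain ⟨U, hxU, rfl⟩ : ∃ U, x ∉ U ∧ insert x U = W :=
      ⟨W.erase x, by simp, insert_erase hx⟩
    have hfilter : #{y ∈ insert x U | G.Adj x y} = #{y ∈ U | G.Adj y x} := by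
      simp only [filter_insert, G.irrefl, if_false, G.adj_comm x]
    have hrow (z : V) :
        #{y ∈ insert x U | G.Adj z y} = #{y ∈ U | G.Adj z y} + if G.Adj z x then 1 else 0 := by
      simp only [card_filter, sum_insert hxU, add_comm]
    have hIH := ih U (ssubset_insert hxU)
    rw [sum_insert hxU, sum_congr rfl fun z _ => hrow z, sum_add_distrib, ← card_filter,
      ← hfilter, card_insert_of_notMem hxU]
    lia

variable [Fintype V]

/-- The vertices adjacent to all vertices of `X`. -/
def commonNeighborFinset (G : SimpleGraph V) [DecidableRel G.Adj] (X : Finset V) : Finset V :=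
  {y | ∀ x ∈ X, G.Adj x y}

lemma mem_commonNeighborFinset {X : Finset V} {y : V} :
    y ∈ commonNeighborFinset G X ↔ ∀ x ∈ X, G.Adj x y := by
  simp [commonNeighborFinset]

lemma isCompleteBetween_commonNeighborFinset (X : Finset V) :
    G.IsCompleteBetween X (commonNeighborFinset G X) :=
  fun _ hx _ hy => mem_commonNeighborFinset.1 hy _ hx

lemma card_filter_lt_le_of_card_commonNeighborFinset_le
    (hG : ∀ X : Finset V, #X = t + 1 → #(commonNeighborFinset G X) ≤ t) (L : Finset V) :
    #{y | t < #{x ∈ L | G.Adj x y}} ≤ t * 2 ^ #L := by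
  classical
  have hcover : ({y | t < #{x ∈ L | G.Adj x y}} : Finset V) ⊆
      (L.powersetCard (t + 1)).biUnion (commonNeighborFinset G) := by
    intro y hy
    obtain ⟨X, hX, hcard⟩ := exists_subset_card_eq (mem_filter.1 hy).2
    refine mem_biUnion.2 ⟨X, mem_powersetCard.2 ⟨hX.trans (filter_subset _ _), hcard⟩, ?_⟩
    exact mem_commonNeighborFinset.2 fun x hx => (mem_filter.1 (hX hx)).2
  calc _ ≤ #(L.powersetCard (t + 1)) * t :=
        (card_le_card hcover).trans <| card_biUnion_le_card_mul _ _ _ fun X hX =>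
          hG X (mem_powersetCard.1 hX).2
    _ ≤ t * 2 ^ #L := by
        rw [mul_comm, card_powersetCard]
        gcongr
        exact Nat.choose_le_two_pow _ _

lemma sum_degree_le_of_card_commonNeighborFinset_le
    (hG : ∀ X : Finset V, #X = t + 1 → #(commonNeighborFinset G X) ≤ t) (L : Finset V) :
    ∑ x ∈ L, G.degree x ≤ t * Fintype.card V + #L * (t * 2 ^ #L) := by
  have hdouble : ∑ x ∈ L, G.degree x = ∑ y, #{x ∈ L | G.Adj x y} := by
    simpa [bipartiteAbove, bipartiteBelow, ← G.card_neighborFinset_eq_degree,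
      G.neighborFinset_eq_filter] using
      sum_card_bipartiteAbove_eq_sum_card_bipartiteBelow (s := L) (t := univ) G.Adj
  have hterm (y : V) : #{x ∈ L | G.Adj x y} ≤
      t + if t < #{x ∈ L | G.Adj x y} then #L else 0 := by
    split_ifs with h
    · exact (card_filter_le _ _).trans (Nat.le_add_left _ _)
    · lia
  calc ∑ x ∈ L, G.degree x
      ≤ ∑ y, (t + if t < #{x ∈ L | G.Adj x y} then #L else 0) :=
        hdouble.trans_le (sum_le_sum fun y _ => hterm y)
    _ = t * Fintype.card V + #L * #{y | t < #{x ∈ L | G.Adj x y}} := by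
        rw [sum_add_distrib, ← sum_filter, sum_const, sum_const, card_univ, smul_eq_mul,
          smul_eq_mul, mul_comm, mul_comm #L]
    _ ≤ t * Fintype.card V + #L * (t * 2 ^ #L) := by
        gcongr
        exact card_filter_lt_le_of_card_commonNeighborFinset_le hG L

lemma card_compl_commonNeighborFinset_le [DecidableEq V] (X : Finset V) :
    #(commonNeighborFinset G X)ᶜ ≤ ∑ x ∈ X, (Fintype.card V - G.degree x) := by
  have hcover : (commonNeighborFinset G X)ᶜ ⊆ X.biUnion fun x => (G.neighborFinset x)ᶜ := by
    intro y hy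
    simpa [mem_commonNeighborFinset] using hy
  refine (card_le_card hcover).trans (card_biUnion_le.trans_eq (sum_congr rfl fun x _ => ?_))
  rw [card_compl, G.card_neighborFinset_eq_degree]

end Graph

/-! ### Stability of power sums -/

section Stability

variable {ι : Type*} {a : ι → ℝ} {L : Finset ι} {q t : ℕ} {η θ ε : ℝ}

/- The nonnegative terms `a x - a x ^ q` have sum at most `2 * ε`. -/
lemma mul_one_sub_le_of_le_sum_pow (hq : 2 ≤ q) (ha₀ : ∀ x ∈ L, 0 ≤ a x) (ha₁ : ∀ x ∈ L, a x ≤ 1)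
    (hsum : ∑ x ∈ L, a x ≤ t + ε) (hpow : t - ε ≤ ∑ x ∈ L, a x ^ q) {x : ι} (hx : x ∈ L)
    (hη : η ≤ a x) : η * (1 - a x) ≤ 2 * ε := by
  have hnonneg : ∀ y ∈ L, 0 ≤ a y - a y ^ q := fun y hy =>
    sub_nonneg.2 (pow_le_of_le_one (ha₀ y hy) (ha₁ y hy) (by lia))
  calc η * (1 - a x) ≤ a x * (1 - a x) :=
        mul_le_mul_of_nonneg_right hη (sub_nonneg.2 (ha₁ x hx))
    _ = a x - a x ^ 2 := by ring
    _ ≤ a x - a x ^ q := sub_le_sub_left (pow_le_pow_of_le_one (ha₀ x hx) (ha₁ x hx) hq) _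
    _ ≤ ∑ y ∈ L, (a y - a y ^ q) := single_le_sum hnonneg hx
    _ ≤ 2 * ε := by rw [sum_sub_distrib]; linarith

lemma card_eq_of_abs_sum_sub_le (ha : ∀ x ∈ L, 1 - θ ≤ a x) (ha₁ : ∀ x ∈ L, a x ≤ 1)
    (hθ₁ : θ ≤ 1) (hsum : |∑ x ∈ L, a x - t| ≤ ε) (hε : ε < 1) (hθ : (t + 1) * θ + ε < 1) :
    #L = t := by
  obtain ⟨hge, hle⟩ := abs_le.1 hsum
  have hupper : ∑ x ∈ L, a x ≤ #L := by simpa using sum_le_card_nsmul L a 1 ha₁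
  have hlower : #L * (1 - θ) ≤ ∑ x ∈ L, a x := by simpa using card_nsmul_le_sum L a (1 - θ) ha
  refine le_antisymm (not_lt.1 fun hlt => ?_) (not_lt.1 fun hlt => ?_)
  · have : (t + 1 : ℝ) ≤ #L := by exact_mod_cast hlt
    nlinarith
  · have : (#L + 1 : ℝ) ≤ t := by exact_mod_cast hlt
    linarith

variable [Fintype ι]

lemma sum_pow_le_sum_filter_pow_add (hq : 3 ≤ q) (ha₀ : ∀ x, 0 ≤ a x) (ha₁ : ∀ x, a x ≤ 1) :
    ∑ x, a x ^ q ≤ ∑ x with η ≤ a x, a x ^ q + (∑ x, a x) * η ^ 2 := by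
  rw [← sum_filter_add_sum_filter_not univ (fun x => η ≤ a x), sum_mul]
  gcongr
  refine (sum_le_sum fun x hx => ?_).trans
    (sum_le_univ_sum_of_nonneg fun x => mul_nonneg (ha₀ x) (sq_nonneg η))
  have hxη : a x ≤ η := (not_le.1 (mem_filter.1 hx).2).le
  calc a x ^ q ≤ a x ^ 3 := pow_le_pow_of_le_one (ha₀ x) (ha₁ x) hq
    _ = a x * a x ^ 2 := by ring
    _ ≤ a x * η ^ 2 := by gcongr <;> exact ha₀ x

theorem card_filter_eq_of_le_sum_pow {C δ : ℝ} (hq : 3 ≤ q) (ha₀ : ∀ x, 0 ≤ a x)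
    (ha₁ : ∀ x, a x ≤ 1) (hC : ∑ x, a x ≤ C) (hη : 0 < η) (hθ₁ : θ ≤ 1)
    (hsum : ∑ x with η ≤ a x, a x ≤ t + δ) (hpow : t - δ ≤ ∑ x, a x ^ q)
    (hηθ : 2 * (δ + C * η ^ 2) ≤ η * θ) (hθ : (t + 1) * θ + (δ + C * η ^ 2) < 1) :
    #{x | η ≤ a x} = t ∧ ∀ x, η ≤ a x → 1 - θ ≤ a x := by
  set L : Finset ι := {x | η ≤ a x}
  set ε := δ + C * η ^ 2
  have hCη : (∑ x, a x) * η ^ 2 ≤ C * η ^ 2 := by gcongr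
  have hC₀ : 0 ≤ C * η ^ 2 :=
    (mul_nonneg (sum_nonneg fun x _ => ha₀ x) (sq_nonneg η)).trans hCη
  have hsumL : ∑ x ∈ L, a x ≤ t + ε := by linarith
  have hpowL : t - ε ≤ ∑ x ∈ L, a x ^ q := by
    have := sum_pow_le_sum_filter_pow_add (η := η) hq ha₀ ha₁
    linarith
  have hnear : ∀ x, η ≤ a x → 1 - θ ≤ a x := fun x hx => by
    have := (mul_one_sub_le_of_le_sum_pow (by lia) (fun y _ => ha₀ y) (fun y _ => ha₁ y) hsumL
      hpowL (mem_filter.2 ⟨mem_univ x, hx⟩) hx).trans hηθ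
    linarith [le_of_mul_le_mul_left this hη]
  have hpow_le : ∑ x ∈ L, a x ^ q ≤ ∑ x ∈ L, a x :=
    sum_le_sum fun x _ => pow_le_of_le_one (ha₀ x) (ha₁ x) (by lia)
  refine ⟨card_eq_of_abs_sum_sub_le (fun x hx => hnear x (mem_filter.1 hx).2) (fun x _ => ha₁ x)
    hθ₁ (abs_le.2 ⟨?_, ?_⟩) (by nlinarith) hθ, hnear⟩ <;> linarith

end Stability

section GraphStability

variable {V : Type*} [Fintype V] {G : SimpleGraph V} [DecidableRel G.Adj]

lemma mul_card_compl_commonNeighborFinset_le [DecidableEq V] {T : Finset V} {t Q : ℕ}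
    (hT : #T = t)
    (hdeg : ∀ x ∈ T, Q * (t + 1) * (Fintype.card V - G.degree x) ≤ Fintype.card V) :
    Q * #(commonNeighborFinset G T)ᶜ ≤ Fintype.card V := by
  refine Nat.le_of_mul_le_mul_left (?_ : (t + 1) * _ ≤ _) t.succ_pos
  calc (t + 1) * (Q * #(commonNeighborFinset G T)ᶜ)
      ≤ (t + 1) * (Q * ∑ x ∈ T, (Fintype.card V - G.degree x)) := by
        gcongr
        exact card_compl_commonNeighborFinset_le T
    _ = ∑ x ∈ T, Q * (t + 1) * (Fintype.card V - G.degree x) := by rw [← mul_sum]; ring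
    _ ≤ #T * Fintype.card V := sum_le_card_nsmul _ _ _ hdeg
    _ ≤ (t + 1) * Fintype.card V := by rw [hT]; gcongr; lia

lemma card_filter_le_degree_div_le {C z : ℕ} (hz : 0 < z) (hV : 0 < Fintype.card V)
    (hC : ∑ x, G.degree x ≤ C * Fintype.card V) :
    #{x | (1 / z : ℝ) ≤ G.degree x / Fintype.card V} ≤ z * C := by
  have hdeg : ∀ x ∈ ({x | (1 / z : ℝ) ≤ G.degree x / Fintype.card V} : Finset V),
      Fintype.card V ≤ z * G.degree x := fun x hx => by
    have := (mem_filter.1 hx).2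
    rw [div_le_div_iff₀ (by positivity) (by positivity)] at this
    rw [mul_comm z]
    exact_mod_cast (one_mul (Fintype.card V : ℝ)).symm.trans_le this
  refine Nat.le_of_mul_le_mul_right (?_ : _ * Fintype.card V ≤ _) hV
  calc _ ≤ ∑ x with (1 / z : ℝ) ≤ G.degree x / Fintype.card V, z * G.degree x :=
        card_nsmul_le_sum _ _ _ hdeg
    _ ≤ ∑ x, z * G.degree x := sum_le_univ_sum_of_nonneg fun _ => Nat.zero_le _
    _ ≤ z * C * Fintype.card V := by rw [← mul_sum, mul_assoc]; gcongr

lemma sum_degree_div_le_and_le_sum_degree_div_pow {t K B q : ℕ} {δ : ℝ} {L : Finset V} (hq : 1 ≤ q)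
    (hV : 0 < Fintype.card V) (hδ : (B + K : ℕ) ≤ δ * Fintype.card V)
    (hL : ∑ x ∈ L, G.degree x ≤ t * Fintype.card V + B)
    (hpow : t * Fintype.card V ^ q ≤ ∑ x, G.degree x ^ q + K * Fintype.card V ^ (q - 1)) :
    ∑ x ∈ L, (G.degree x / Fintype.card V : ℝ) ≤ t + δ ∧
      t - δ ≤ ∑ x, (G.degree x / Fintype.card V : ℝ) ^ q := by
  have hV' : (0 : ℝ) < Fintype.card V := by exact_mod_cast hV
  push_cast at hδ
  constructor
  · rw [← sum_div, div_le_iff₀ hV']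
    have : (∑ x ∈ L, G.degree x : ℝ) ≤ t * Fintype.card V + B := by exact_mod_cast hL
    linarith [K.cast_nonneg (α := ℝ)]
  · simp only [div_pow]
    rw [← sum_div, le_div_iff₀ (by positivity)]
    have hpow' : (t * Fintype.card V ^ q : ℝ) ≤
        ∑ x, (G.degree x : ℝ) ^ q + K * Fintype.card V ^ (q - 1) := by exact_mod_cast hpow
    have hKδ : (K * Fintype.card V ^ (q - 1) : ℝ) ≤ δ * Fintype.card V ^ q := by
      calc (K * Fintype.card V ^ (q - 1) : ℝ)
          ≤ δ * Fintype.card V * Fintype.card V ^ (q - 1) := by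
            gcongr; linarith [B.cast_nonneg (α := ℝ)]
        _ = δ * Fintype.card V ^ q := by rw [mul_assoc, mul_pow_sub_one (by lia)]
    linarith

lemma stability_parameters {t C r z : ℝ} (ht : 0 ≤ t) (hC : 0 ≤ C) (hr : 2 * (t + 1) ≤ r)
    (hz : z = 4 * C * r + 1) :
    2 * (1 / (4 * z * r) + C * (1 / z) ^ 2) ≤ 1 / z * (1 / r) ∧
      (t + 1) * (1 / r) + (1 / (4 * z * r) + C * (1 / z) ^ 2) < 1 := by
  have hr₀ : 2 ≤ r := by linarith
  have hz₀ : 1 ≤ z := by nlinarith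
  have herror : 2 * (1 / (4 * z * r) + C * (1 / z) ^ 2) ≤ 1 / z * (1 / r) := by
    field_simp
    linarith
  have hzr : 1 / z * (1 / r) ≤ 1 / 2 := by
    field_simp
    nlinarith
  have htr : (t + 1) * (1 / r) ≤ 1 / 2 := by
    field_simp
    linarith
  exact ⟨herror, by linarith⟩

lemma mul_sub_le_of_one_sub_div_le {r n d : ℕ} (hr : 0 < r) (hn : 0 < n)
    (hd : (1 - 1 / r : ℝ) ≤ d / n) : r * (n - d) ≤ n := by
  have : (r * n : ℝ) ≤ n + r * d := by
    field_simp at hd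
    linarith
  rw [Nat.mul_sub]
  have : r * n ≤ n + r * d := by exact_mod_cast this
  lia

theorem exists_card_compl_commonNeighborFinset_le (t C K : ℕ) {q Q : ℕ} (hq : 3 ≤ q)
    (hQ : 2 ≤ Q) :
    ∃ n₀ : ℕ, ∀ (V : Type*) [Fintype V] [DecidableEq V] (G : SimpleGraph V) [DecidableRel G.Adj],
      n₀ ≤ Fintype.card V →
      (∀ X : Finset V, #X = t + 1 → #(commonNeighborFinset G X) ≤ t) →
      ∑ x, G.degree x ≤ C * Fintype.card V →
      t * Fintype.card V ^ q ≤ ∑ x, G.degree x ^ q + K * Fintype.card V ^ (q - 1) →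
      ∃ T : Finset V, #T = t ∧ Q * #(commonNeighborFinset G T)ᶜ ≤ Fintype.card V := by
  obtain ⟨r, hr⟩ : ∃ r, r = Q * (t + 1) := ⟨_, rfl⟩
  obtain ⟨z, hz⟩ : ∃ z, z = 4 * C * r + 1 := ⟨_, rfl⟩
  obtain ⟨B, hB⟩ : ∃ B, B = z * C * (t * 2 ^ (z * C)) := ⟨_, rfl⟩
  refine ⟨4 * z * r * (B + K) + 1, fun V _ _ G _ hn hG hC hpow => ?_⟩
  have hr₂ : 2 * (t + 1) ≤ r := by rw [hr]; gcongr
  have hV : (0 : ℝ) < Fintype.card V := by exact_mod_cast (by lia : 0 < Fintype.card V)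
  have hr₀ : (1 : ℝ) ≤ r := by exact_mod_cast (by lia : 1 ≤ r)
  have hz₀ : (0 : ℝ) < z := by exact_mod_cast (by lia : 0 < z)
  set L : Finset V := {x | (1 / z : ℝ) ≤ G.degree x / Fintype.card V}
  have hLsum : ∑ x ∈ L, G.degree x ≤ t * Fintype.card V + B := by
    have hL : #L ≤ z * C := card_filter_le_degree_div_le (by lia) (by lia) hC
    refine (sum_degree_le_of_card_commonNeighborFinset_le hG L).trans ?_
    rw [hB]
    gcongr
    norm_num
  have hδ : ((B + K : ℕ) : ℝ) ≤ 1 / (4 * z * r) * Fintype.card V := by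
    rw [one_div_mul_eq_div, le_div_iff₀ (by positivity), mul_comm]
    exact_mod_cast (by lia : 4 * z * r * (B + K) ≤ Fintype.card V)
  obtain ⟨hsum, hpow⟩ :=
    sum_degree_div_le_and_le_sum_degree_div_pow (by lia) (by lia) hδ hLsum hpow
  obtain ⟨hηθ, hθ⟩ := stability_parameters t.cast_nonneg C.cast_nonneg
    (by exact_mod_cast hr₂ : (2 * (t + 1) : ℝ) ≤ r) (by exact_mod_cast hz : (z : ℝ) = 4 * C * r + 1)
  obtain ⟨hcard, hnear⟩ := card_filter_eq_of_le_sum_pow hq (fun x => by positivity)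
    (fun x => div_le_one_of_le₀ (by exact_mod_cast (G.degree_lt_card_verts x).le) hV.le)
    (by rw [← sum_div, div_le_iff₀ hV]; exact_mod_cast hC) (by positivity)
    ((div_le_one (by positivity)).2 hr₀) hsum hpow hηθ hθ
  refine ⟨L, hcard, mul_card_compl_commonNeighborFinset_le hcard fun x hx => hr ▸ ?_⟩
  exact mul_sub_le_of_one_sub_div_le (by lia) (by lia) (hnear x (mem_filter.1 hx).2)

end GraphStability

/-! ### Comparison with the sets meeting a fixed set -/

section Meeting

lemma sum_Icc_choose_add_choose {n t : ℕ} (k : ℕ) (ht : t ≤ n) :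
    ∑ i ∈ Icc 1 t, (n - i).choose k + (n - t).choose (k + 1) = n.choose (k + 1) := by
  induction t with
  | zero => simp
  | succ t ih =>
    have hpascal : (n - t).choose (k + 1) =
        (n - (t + 1)).choose k + (n - (t + 1)).choose (k + 1) := by
      rw [← Nat.choose_succ_succ', show n - (t + 1) + 1 = n - t by lia]
    rw [sum_Icc_succ_top (by lia), add_assoc, ← hpascal, ih (by lia)]

variable {V : Type*} [DecidableEq V] {k : ℕ} {T : Finset V}

/- The edges at even positions of a linear path are pairwise disjoint. -/
lemma not_hasLinearPath_of_forall_not_disjoint {H : Finset (Finset V)}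
    (hT : ∀ E ∈ H, ¬ Disjoint E T) : ¬ HasLinearPath (2 * #T + 1) H := by
  rintro ⟨P, hPH, hP⟩
  let even (i : Fin (#T + 1)) : Fin (2 * #T + 1) := ⟨2 * i, by lia⟩
  have hmeet (i : Fin (#T + 1)) : ∃ x ∈ P (even i), x ∈ T := not_disjoint_iff.1 (hT _ (hPH _))
  choose f hfP hfT using hmeet
  have hne {i j : Fin (#T + 1)} (hij : i < j) : f i ≠ f j := fun h =>
    disjoint_left.1 (hP.disjoint (even i) (even j) (by simp only [even]; lia)) (hfP i)
      (h ▸ hfP j)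
  have hinj : Function.Injective f := .of_lt_imp_ne fun _ _ => hne
  have hcard := card_le_card_of_injOn (s := univ) f (fun i _ => hfT i) hinj.injOn
  rw [card_univ, Fintype.card_fin] at hcard
  lia

lemma card_image_union_powersetCard {N P : Finset V} (hNP : Disjoint N P) (j : ℕ) :
    #((N.powersetCard j).image (· ∪ P)) = (#N).choose j := by
  have hdisj {S : Finset V} (hS : S ∈ N.powersetCard j) : Disjoint S P :=
    hNP.mono_left (mem_powersetCard.1 hS).1
  rw [card_image_of_injOn, card_powersetCard]
  intro S hS S' hS' h
  rw [← union_sdiff_cancel_right (hdisj hS), ← union_sdiff_cancel_right (hdisj hS')]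
  exact congrArg (· \ P) h

variable [Fintype V]

/-- The `k`-subsets of `V` that meet `T`: the extremal family. -/
def kSetsMeeting (k : ℕ) (T : Finset V) : Finset (Finset V) :=
  {E ∈ univ.powersetCard k | ¬ Disjoint E T}

lemma mem_kSetsMeeting {E : Finset V} : E ∈ kSetsMeeting k T ↔ #E = k ∧ ¬ Disjoint E T := by
  simp [kSetsMeeting, mem_powersetCard]

lemma card_kSetsMeeting (hk : k ≠ 0) (T : Finset V) :
    #(kSetsMeeting k T) = ∑ i ∈ Icc 1 #T, (Fintype.card V - i).choose (k - 1) := by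
  have hdisjoint : ({E ∈ univ.powersetCard k | Disjoint E T} : Finset (Finset V)) =
      Tᶜ.powersetCard k := by
    ext E
    simp only [mem_filter, mem_powersetCard, subset_univ, true_and,
      subset_compl_iff_disjoint_right, and_comm]
  have hsplit := card_filter_add_card_filter_not (s := univ.powersetCard k) fun E => Disjoint E T
  have hsum := sum_Icc_choose_add_choose (k - 1) T.card_le_univ
  rw [hdisjoint, card_powersetCard, card_powersetCard, card_compl, card_univ] at hsplit
  rw [Nat.sub_add_cancel (Nat.one_le_iff_ne_zero.2 hk)] at hsum
  rw [kSetsMeeting]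
  lia

end Meeting

section Comparison

variable {V : Type*} [DecidableEq V] [Fintype V] {k s t : ℕ} {H : Finset (Finset V)} {T : Finset V}

lemma card_commonNeighborFinset_kernelGraph_le (hH : (H : Set (Finset V)).Sized k)
    (hs : (2 * t + 1) * k ≤ s) (hpath : ¬ HasLinearPath (2 * t + 1) H) (hT : #T = t + 1) :
    #(commonNeighborFinset (kernelGraph s H) T) ≤ t := by
  by_contra! hlt
  obtain ⟨x, hx⟩ : T.Nonempty := card_pos.1 (by lia)
  obtain ⟨w, p, hp, hlen, -⟩ := exists_isPath_of_isCompleteBetween (m := 2 * t + 1)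
    (isCompleteBetween_commonNeighborFinset (G := kernelGraph s H) T) hx (by lia) (by lia)
  exact hpath (hlen ▸ hasLinearPath_of_isPath hH hp (hlen ▸ hs))

/- Otherwise an alternating path of length `2 * t` in the kernel graph extends the edge to a linear
path. -/
lemma disjoint_commonNeighborFinset_kernelGraph (hH : (H : Set (Finset V)).Sized k)
    (hs : (2 * t + 1) * k ≤ s) (hpath : ¬ HasLinearPath (2 * t + 1) H) (hT : #T = t)
    (hN : t + k ≤ #(commonNeighborFinset (kernelGraph s H) T)) {E : Finset V} (hE : E ∈ H)
    (hET : Disjoint E T) : Disjoint E (commonNeighborFinset (kernelGraph s H) T) := by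
  set N := commonNeighborFinset (kernelGraph s H) T
  refine disjoint_left.2 fun y hyE hyN => hpath ?_
  have hXN : insert y (N \ E) ⊆ N := insert_subset hyN sdiff_subset
  have hcomplete : (kernelGraph s H).IsCompleteBetween (insert y (N \ E) : Finset V) T :=
    fun v hv w hw => (isCompleteBetween_commonNeighborFinset T hw (hXN hv)).symm
  have hX : t < #(insert y (N \ E)) := by
    have := le_card_sdiff E N
    rw [hH hE] at this
    rw [card_insert_of_notMem (by simp [hyE])]
    lia
  obtain ⟨w, p, hp, hlen, hsupp⟩ := exists_isPath_of_isCompleteBetween (m := 2 * t) hcomplete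
    (mem_insert_self y _) (by lia) (by lia)
  rw [← hlen] at hs ⊢
  refine hasLinearPath_of_isPath_of_edge hH hp hs hE hyE fun z hz hzE => ?_
  have := hsupp z hz
  simpa [hzE, disjoint_left.1 hET hzE] using this

lemma card_filter_subset_le_of_not_isKernel (hH : (H : Set (Finset V)).Sized k) {A : Finset V}
    (hA : ¬ IsKernel s H A) :
    #{E ∈ H | A ⊆ E} ≤ s * Fintype.card V ^ (k - #A - 1) := by
  simp only [IsKernel] at hA
  push Not at hA
  obtain ⟨S, hS, hmeet⟩ := hA
  have hcover : {E ∈ H | A ⊆ E} ⊆ S.biUnion fun y =>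
      (univ.powersetCard (k - #A - 1)).image (insert y A ∪ ·) := by
    intro E hE
    obtain ⟨hEH, hAE⟩ := mem_filter.1 hE
    obtain ⟨y, hy, hyA⟩ := not_subset.1 (hmeet E hEH hAE)
    obtain ⟨hyE, hyS⟩ := mem_inter.1 hy
    have hsub : insert y A ⊆ E := insert_subset hyE hAE
    refine mem_biUnion.2 ⟨y, hyS, mem_image.2 ⟨E \ insert y A, ?_, union_sdiff_of_subset hsub⟩⟩
    rw [mem_powersetCard_univ, card_sdiff_of_subset hsub, card_insert_of_notMem hyA, hH hEH,
      Nat.sub_add_eq]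
  calc _ ≤ #S * Fintype.card V ^ (k - #A - 1) :=
        (card_le_card hcover).trans <| card_biUnion_le_card_mul _ _ _ fun y _ =>
          card_image_le.trans <| by
            rw [card_powersetCard, card_univ]
            exact Nat.choose_le_pow _ _
    _ ≤ s * Fintype.card V ^ (k - #A - 1) := by gcongr

lemma choose_le_card_missing_add (hk : 2 ≤ k) (hH : (H : Set (Finset V)).Sized k) {N W : Finset V}
    (hNW : Disjoint N W) (hTW : Disjoint T W) (hNT : Disjoint N T) {x z : V} (hx : x ∈ T)
    (hz : z ∈ W) (hxz : ¬ (kernelGraph s H).Adj x z) :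
    (#N).choose (k - 2) ≤
      #{E ∈ kSetsMeeting k T \ H | E ∩ W = {z}} + s * Fintype.card V ^ (k - 3) := by
  have hzN : z ∉ N := disjoint_right.1 hNW hz
  have hxN : x ∉ N := disjoint_right.1 hNT hx
  have hxW : x ∉ W := disjoint_left.1 hTW hx
  have hne : x ≠ z := fun h => hxW (h ▸ hz)
  have hpair : Disjoint N {x, z} := by simp [hxN, hzN]
  have hcover : (N.powersetCard (k - 2)).image (· ∪ {x, z}) ⊆
      {E ∈ kSetsMeeting k T \ H | E ∩ W = {z}} ∪ {E ∈ H | {x, z} ⊆ E} := by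
    refine image_subset_iff.2 fun S hS => ?_
    obtain ⟨hSN, hScard⟩ := mem_powersetCard.1 hS
    by_cases hSH : S ∪ {x, z} ∈ H
    · exact mem_union_right _ (mem_filter.2 ⟨hSH, subset_union_right⟩)
    refine mem_union_left _ (mem_filter.2 ⟨mem_sdiff.2 ⟨mem_kSetsMeeting.2 ⟨?_, ?_⟩, hSH⟩, ?_⟩)
    · rw [card_union_of_disjoint (hpair.mono_left hSN), card_pair hne, hScard]
      lia
    · exact not_disjoint_iff.2 ⟨x, by simp, hx⟩
    · rw [union_inter_distrib_right, disjoint_iff_inter_eq_empty.1 (hNW.mono_left hSN),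
        empty_union, insert_inter_of_notMem hxW, singleton_inter_of_mem hz]
  have hker := card_filter_subset_le_of_not_isKernel hH (A := {x, z}) fun h => hxz ⟨hne, h⟩
  rw [card_pair hne] at hker
  have hcard := (card_le_card hcover).trans (card_union_le _ _)
  rw [card_image_union_powersetCard hpair] at hcard
  exact hcard.trans (Nat.add_le_add_left hker _)

lemma mul_le_card_missing (hk : 2 ≤ k) (hH : (H : Set (Finset V)).Sized k) {B : ℕ} {N : Finset V}
    (hN : commonNeighborFinset (kernelGraph s H) T = N)
    (hB : B + s * Fintype.card V ^ (k - 3) ≤ (#N).choose (k - 2)) :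
    #(N ∪ T)ᶜ * B ≤ #(kSetsMeeting k T \ H) := by
  set W := (N ∪ T)ᶜ
  have hNT : Disjoint N T := hN ▸
    (disjoint_coe.1 (isCompleteBetween_commonNeighborFinset T).disjoint).symm
  have hNW : Disjoint N W := disjoint_compl_right.mono_left subset_union_left
  have hTW : Disjoint T W := disjoint_compl_right.mono_left subset_union_right
  have hfiber : ∀ z ∈ W, B ≤ #{E ∈ kSetsMeeting k T \ H | E ∩ W = {z}} := fun z hz => by
    have hzN : z ∉ commonNeighborFinset (kernelGraph s H) T := hN ▸ disjoint_right.1 hNW hz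
    rw [mem_commonNeighborFinset] at hzN
    push Not at hzN
    obtain ⟨x, hx, hxz⟩ := hzN
    have := choose_le_card_missing_add hk hH hNW hTW hNT hx hz hxz
    lia
  have hdisj : (W : Set V).PairwiseDisjoint fun z => {E ∈ kSetsMeeting k T \ H | E ∩ W = {z}} :=
    fun z _ z' _ hne => disjoint_filter.2 fun E _ hz hz' =>
      hne (singleton_injective (hz.symm.trans hz'))
  calc #W * B ≤ ∑ z ∈ W, #{E ∈ kSetsMeeting k T \ H | E ∩ W = {z}} :=
        card_nsmul_le_sum _ _ _ hfiber
    _ = #(W.biUnion fun z => {E ∈ kSetsMeeting k T \ H | E ∩ W = {z}}) := (card_biUnion hdisj).symm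
    _ ≤ #(kSetsMeeting k T \ H) := card_le_card (biUnion_subset.2 fun z _ => filter_subset _ _)

/- The edges avoiding `T` lie inside `W = (N ∪ T)ᶜ`, whereas each vertex of `W` is the only vertex
in `W` of many missing sets that meet `T`. -/
theorem card_le_card_kSetsMeeting (hk : 2 ≤ k) (hs₀ : 0 < s) (hH : (H : Set (Finset V)).Sized k)
    (hs : (2 * t + 1) * k ≤ s) (hpath : ¬ HasLinearPath (2 * t + 1) H) (hT : #T = t)
    {N : Finset V} (hN : commonNeighborFinset (kernelGraph s H) T = N) (hNcard : t + k ≤ #N)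
    (hchoose : homogeneousConst k s * #Nᶜ ^ (k - 2) + s * Fintype.card V ^ (k - 3) ≤
      (#N).choose (k - 2)) :
    #H ≤ #(kSetsMeeting k T) := by
  set W := (N ∪ T)ᶜ
  have hWN : #W ≤ #Nᶜ := card_le_card (compl_subset_compl.2 subset_union_left)
  have hextra : #(H \ kSetsMeeting k T) ≤ homogeneousConst k s * #W ^ (k - 1) := by
    refine card_le_of_not_hasLinearPath hk hs₀ hs (hH.mono (coe_subset.2 sdiff_subset))
      (fun h => hpath (h.mono sdiff_subset)) fun E hE => ?_
    obtain ⟨hEH, hE⟩ := mem_sdiff.1 hE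
    have hET : Disjoint E T := by
      by_contra hET
      exact hE (mem_kSetsMeeting.2 ⟨hH hEH, hET⟩)
    have hEN := disjoint_commonNeighborFinset_kernelGraph hH hs hpath hT (hN ▸ hNcard) hEH hET
    exact subset_compl_iff_disjoint_right.2 (disjoint_union_right.2 ⟨hN ▸ hEN, hET⟩)
  refine card_sdiff_le_card_sdiff_iff.1 ?_
  calc #(H \ kSetsMeeting k T) ≤ homogeneousConst k s * #W ^ (k - 1) := hextra
    _ = #W * (homogeneousConst k s * #W ^ (k - 2)) := by
        rw [show k - 1 = k - 2 + 1 by lia, pow_succ]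
        ring
    _ ≤ #W * (homogeneousConst k s * #Nᶜ ^ (k - 2)) := by gcongr
    _ ≤ #(kSetsMeeting k T \ H) := mul_le_card_missing hk hH hN hchoose

end Comparison

/-! ### The Turán number -/

section Turan

lemma pow_le_sub_pow_add {n c : ℕ} (hc : c ≤ n) (q : ℕ) :
    n ^ q ≤ (n - c) ^ q + q * c * n ^ (q - 1) := by
  have h := (le_abs_self _).trans (abs_pow_sub_pow_le (n : ℤ) ((n - c : ℕ) : ℤ) q)
  rw [Nat.cast_sub hc, sub_sub_cancel, Nat.abs_cast, Nat.abs_cast, ← Nat.cast_sub hc, Nat.abs_cast,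
    max_eq_left (by exact_mod_cast n.sub_le c), mul_comm (c : ℤ)] at h
  zify
  linarith

lemma mul_pow_le_factorial_mul_sum_choose_add {n t q : ℕ} (hn : t + q ≤ n) :
    t * n ^ q ≤ q.factorial * ∑ i ∈ Icc 1 t, (n - i).choose q +
      t * (q * (t + q)) * n ^ (q - 1) := by
  have hterm : ∀ i ∈ Icc 1 t, (n - (t + q)) ^ q ≤ q.factorial * (n - i).choose q := fun i hi => by
    rw [← Nat.descFactorial_eq_factorial_mul_choose]
    refine (Nat.pow_le_pow_left ?_ q).trans (Nat.pow_sub_le_descFactorial _ _)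
    have := (mem_Icc.1 hi).2
    lia
  calc t * n ^ q ≤ t * ((n - (t + q)) ^ q + q * (t + q) * n ^ (q - 1)) := by
        gcongr
        exact pow_le_sub_pow_add hn q
    _ = t * (n - (t + q)) ^ q + t * (q * (t + q)) * n ^ (q - 1) := by ring
    _ ≤ _ := by
        refine Nat.add_le_add_right ?_ _
        simpa [mul_sum] using card_nsmul_le_sum _ _ _ hterm

lemma add_le_choose_of_mul_le {C s d Q n N w : ℕ} (hd : d ≠ 0)
    (hQ : 2 * 4 ^ d * d.factorial * C + 2 ≤ Q) (hw : Q * w ≤ n) (hN : N + w = n)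
    (hs : 2 * 4 ^ d * d.factorial * s ≤ n) (hn : 4 * d ≤ n) :
    C * w ^ d + s * n ^ (d - 1) ≤ N.choose d := by
  have hN4 : n ≤ 4 * (N + 1 - d) := by
    have : 2 * w ≤ n := (Nat.mul_le_mul_right w (by lia)).trans hw
    lia
  have hchoose : n ^ d ≤ 4 ^ d * (d.factorial * N.choose d) := by
    rw [← Nat.descFactorial_eq_factorial_mul_choose]
    calc n ^ d ≤ (4 * (N + 1 - d)) ^ d := Nat.pow_le_pow_left hN4 d
      _ = 4 ^ d * (N + 1 - d) ^ d := mul_pow _ _ _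
      _ ≤ 4 ^ d * N.descFactorial d := Nat.mul_le_mul_left _ (Nat.pow_sub_le_descFactorial _ _)
  have hCw : 2 * 4 ^ d * d.factorial * C * w ^ d ≤ n ^ d := by
    calc _ ≤ Q * w ^ d := Nat.mul_le_mul_right _ (by lia)
      _ ≤ Q ^ d * w ^ d := Nat.mul_le_mul_right _ (Nat.le_self_pow hd Q)
      _ = (Q * w) ^ d := (mul_pow _ _ _).symm
      _ ≤ n ^ d := Nat.pow_le_pow_left hw d
  have hsn : 2 * 4 ^ d * d.factorial * s * n ^ (d - 1) ≤ n ^ d := by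
    calc _ ≤ n * n ^ (d - 1) := Nat.mul_le_mul_right _ hs
      _ = n ^ d := mul_pow_sub_one hd n
  refine Nat.le_of_mul_le_mul_left (?_ : 2 * 4 ^ d * d.factorial * _ ≤ _) (by positivity)
  calc _ = 2 * 4 ^ d * d.factorial * C * w ^ d + 2 * 4 ^ d * d.factorial * s * n ^ (d - 1) := by
        ring
    _ ≤ n ^ d + n ^ d := add_le_add hCw hsn
    _ ≤ 2 * 4 ^ d * d.factorial * N.choose d := by linarith

variable {V : Type*} [DecidableEq V] [Fintype V] {k s m t : ℕ} {H : Finset (Finset V)}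

lemma mul_pow_le_sum_degree_pow_add (hk : 4 ≤ k) (hs : 0 < s) (hms : m * k ≤ s)
    (hH : (H : Set (Finset V)).Sized k) (hpath : ¬ HasLinearPath m H)
    (hn : t + (k - 1) ≤ Fintype.card V)
    (hlarge : ∑ i ∈ Icc 1 t, (Fintype.card V - i).choose (k - 1) ≤ #H) :
    t * Fintype.card V ^ (k - 1) ≤ ∑ x, (kernelGraph s H).degree x ^ (k - 1) +
      (t * ((k - 1) * (t + (k - 1))) + (k - 1).factorial * homogeneousConst k s) *
        Fintype.card V ^ (k - 1 - 1) := by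
  have hdeg : (k - 1).factorial * ∑ x, ((kernelGraph s H).degree x).choose (k - 1) ≤
      ∑ x, (kernelGraph s H).degree x ^ (k - 1) := by
    rw [mul_sum]
    refine sum_le_sum fun x _ => ?_
    rw [← Nat.descFactorial_eq_factorial_mul_choose]
    exact Nat.descFactorial_le_pow _ _
  have hcard := Nat.mul_le_mul_left (k - 1).factorial
    (hlarge.trans (card_le_add_sum_choose_degree hk hs hms hH hpath))
  have hpow := mul_pow_le_factorial_mul_sum_choose_add hn
  rw [show k - 1 - 1 = k - 2 by lia] at hpow ⊢
  linarith

theorem exists_card_le_sum_choose_of_not_hasLinearPath (t : ℕ) (hk : 4 ≤ k) :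
    ∃ n₀ : ℕ, ∀ (V : Type*) [DecidableEq V] [Fintype V], n₀ ≤ Fintype.card V →
      ∀ H : Finset (Finset V), (H : Set (Finset V)).Sized k → ¬ HasLinearPath (2 * t + 1) H →
        #H ≤ ∑ i ∈ Icc 1 t, (Fintype.card V - i).choose (k - 1) := by
  obtain ⟨s, hs⟩ : ∃ s, s = (2 * t + 1) * k := ⟨_, rfl⟩
  have hs₀ : 0 < s := by rw [hs]; positivity
  obtain ⟨Q, hQ⟩ : ∃ Q, Q = 2 * 4 ^ (k - 2) * (k - 2).factorial * homogeneousConst k s + 2 :=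
    ⟨_, rfl⟩
  obtain ⟨n₁, hn₁⟩ := exists_card_compl_commonNeighborFinset_le t (2 * (2 * t + 1))
    (t * ((k - 1) * (t + (k - 1))) + (k - 1).factorial * homogeneousConst k s) (q := k - 1)
    (Q := Q) (by lia) (by lia)
  refine ⟨n₁ + 2 * 4 ^ (k - 2) * (k - 2).factorial * s + 4 * k + 4 * t,
    fun V _ _ hn H hH hpath => ?_⟩
  by_contra! hlarge
  obtain ⟨T, hT, hQN⟩ := hn₁ V (kernelGraph s H) (by lia)
    (fun X hX => card_commonNeighborFinset_kernelGraph_le hH hs.ge hpath hX)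
    (sum_degree_le_of_forall_isPath_length_ne fun x y p hp hlen =>
      hpath (hlen ▸ hasLinearPath_of_isPath hH hp (hlen ▸ hs.ge)))
    (mul_pow_le_sum_degree_pow_add hk hs₀ hs.ge hH hpath (by lia) hlarge.le)
  set N := commonNeighborFinset (kernelGraph s H) T with hN
  have hNcard := card_add_card_compl N
  have hcompl : 2 * #Nᶜ ≤ Fintype.card V := (Nat.mul_le_mul_right _ (by lia)).trans hQN
  have hle := card_le_card_kSetsMeeting (by lia) hs₀ hH hs.ge hpath hT hN.symm (by lia)
    (add_le_choose_of_mul_le (by lia) hQ.ge hQN hNcard (by lia) (by lia))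
  rw [card_kSetsMeeting (by lia), hT] at hle
  lia

end Turan

/-- F\"uredi–Jiang–Seiver: for k ≥ 4, t ≥ 1 and all sufficiently large n, the Turán number
of the k-uniform linear path of length 2t+1 is C(n-1,k-1)+⋯+C(n-t,k-1). -/
theorem turan_linear_path_odd (k t : ℕ) (hk : 4 ≤ k) (ht : 1 ≤ t) :
    ∃ n₀ : ℕ, ∀ n : ℕ, n₀ ≤ n →
      IsGreatest {m : ℕ | ∃ F : Finset (Finset (Fin n)),
          (∀ A ∈ F, A.card = k) ∧ ¬ ContainsLinearPath k (2 * t + 1) F ∧ F.card = m}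
        (∑ i ∈ Finset.Icc 1 t, (n - i).choose (k - 1)) := by
  obtain ⟨n₀, hn₀⟩ := exists_card_le_sum_choose_of_not_hasLinearPath t hk
  refine ⟨max n₀ t, fun n hn => ⟨?_, ?_⟩⟩
  · obtain ⟨T, -, rfl⟩ : ∃ T ⊆ (univ : Finset (Fin n)), #T = t :=
      exists_subset_card_eq (by rw [card_univ, Fintype.card_fin]; lia)
    refine ⟨kSetsMeeting k T, fun E hE => (mem_kSetsMeeting.1 hE).1, fun hpath => ?_, ?_⟩
    · exact not_hasLinearPath_of_forall_not_disjoint (fun E hE => (mem_kSetsMeeting.1 hE).2)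
        hpath.hasLinearPath
    · rw [card_kSetsMeeting (by lia), Fintype.card_fin]
  · rintro _ ⟨H, hH, hpath, rfl⟩
    have hbound := hn₀ (Fin n) (by rw [Fintype.card_fin]; lia) H (fun E hE => hH E hE)
      fun h => hpath (h.containsLinearPath (by lia) fun E hE => hH E hE)
    rwa [Fintype.card_fin] at hbound
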